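/- arXiv:2401.04888 — 2 statements merged into one kernel-verified Lean document; each statement's English description precedes it below -/
import Mathlib

section
/- There exists a constant C > 0 such that for every smooth vector field u : ℝ² → ℝ² that is 2π-periodic in each coordinate and mean-free (∫_Ω u dx = 0), one has | ∫_Ω ((u·∇)u)·u dx | ≤ C ‖Δu‖²_{L²(Ω)} ‖u‖_{Ḣ^{−2}}. -/
/-!
Write `‖·‖` for the `L²(Ω)` norm. The estimate reduces to three facts about a smooth periodic
mean-free scalar field `f`.

* Ladyzhenskaya: `∫ F²G² ≤ (‖F‖² + 2‖F‖‖∂₁F‖)(‖G‖² + 2‖G‖‖∂₂G‖)` (`ladyzhenskaya`). On each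
  horizontal line `F²` is bounded by an integral over that line, on each vertical line likewise
  `G²`, and the product of the two bounds factorizes under the integral. With Cauchy–Schwarz this
  bounds every term `∫ uⱼ uᵢ ∂ⱼuᵢ` of the trilinear form (`term_bound`).
* `‖∂ⱼf‖² ≤ ‖f‖‖Δf‖` (`grad_interp`), by integration by parts.
* `‖f‖ ≤ ‖Δf‖` (`l2_le_lap`) and `‖f‖² ≤ ‖Δf‖‖f‖_{Ḣ^{-2}}` (`l2_interp`), from Parseval's identity
  on the box (`parseval`) and `|(Δf)^_ℓ| = |ℓ|²|f̂_ℓ|` (`norm_fc_lap`); the zero mode vanishes.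

With `p = ‖u‖`, `q = ‖Δu‖` and `r = √(pq)` bounding the first derivatives, each of the four terms
is at most `(p² + 2pr)r ≤ 3p²q`, while `p² ≤ 2q‖u‖_{Ḣ^{-2}}`. The constant is `24`.
-/

open Real MeasureTheory Set intervalIntegral
open scoped Real Classical

noncomputable section

/-- Partial derivative in the first spatial coordinate. -/
def pd1 (f : ℝ × ℝ → ℝ) (x : ℝ × ℝ) : ℝ := deriv (fun s => f (s, x.2)) x.1

/-- Partial derivative in the second spatial coordinate. -/
def pd2 (f : ℝ × ℝ → ℝ) (x : ℝ × ℝ) : ℝ := deriv (fun s => f (x.1, s)) x.2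

/-- Advective derivative `(v·∇)f = v¹ ∂₁f + v² ∂₂f`. -/
def adv (v : ℝ × ℝ → ℝ × ℝ) (f : ℝ × ℝ → ℝ) (x : ℝ × ℝ) : ℝ :=
  (v x).1 * pd1 f x + (v x).2 * pd2 f x

/-- Divergence `∇·v = ∂₁v¹ + ∂₂v²`. -/
def divg (v : ℝ × ℝ → ℝ × ℝ) (x : ℝ × ℝ) : ℝ :=
  pd1 (fun y => (v y).1) x + pd2 (fun y => (v y).2) x

/-- Scalar curl `∇⊥·v = ∂₁v² − ∂₂v¹`. -/
def curl2 (v : ℝ × ℝ → ℝ × ℝ) (x : ℝ × ℝ) : ℝ :=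
  pd1 (fun y => (v y).2) x - pd2 (fun y => (v y).1) x

/-- Laplacian `Δf = ∂₁²f + ∂₂²f`. -/
def lap (f : ℝ × ℝ → ℝ) : ℝ × ℝ → ℝ := fun x => pd1 (pd1 f) x + pd2 (pd2 f) x

/-- `|∇v|² = Σ_{i,j} (∂ᵢvʲ)²`. -/
def gradNormSq (v : ℝ × ℝ → ℝ × ℝ) (x : ℝ × ℝ) : ℝ :=
  (pd1 (fun y => (v y).1) x)^2 + (pd2 (fun y => (v y).1) x)^2 +
  (pd1 (fun y => (v y).2) x)^2 + (pd2 (fun y => (v y).2) x)^2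

/-- The periodic box `Ω = [0,2π]²`. -/
def Omega2 : Set (ℝ × ℝ) := Set.Icc (0:ℝ) (2*π) ×ˢ Set.Icc (0:ℝ) (2*π)

/-- `2π`-periodicity in each coordinate for a vector field. -/
def Periodic2 (f : ℝ × ℝ → ℝ × ℝ) : Prop :=
  ∀ x : ℝ × ℝ, f (x.1 + 2*π, x.2) = f x ∧ f (x.1, x.2 + 2*π) = f x

/-- Squared `L²(Ω)` norm of a vector field. -/
def l2sq (v : ℝ × ℝ → ℝ × ℝ) : ℝ := ∫ x in Omega2, ((v x).1^2 + (v x).2^2)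

/-- Squared `L²(Ω)` norm of `Δv`. -/
def l2sqLap (v : ℝ × ℝ → ℝ × ℝ) : ℝ :=
  ∫ x in Omega2, ((lap (fun y => (v y).1) x)^2 + (lap (fun y => (v y).2) x)^2)

/-- `ℓ`-th Fourier coefficient of a scalar field. -/
def fc (f : ℝ × ℝ → ℝ) (ℓ : ℤ × ℤ) : ℂ :=
  ((2*π)^2)⁻¹ • ∫ x in Omega2,
    (f x : ℂ) * Complex.exp (-(Complex.I) * ((ℓ.1:ℂ) * (x.1:ℂ) + (ℓ.2:ℂ) * (x.2:ℂ)))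

/-- `ℓ`-th Fourier coefficient of a vector field. -/
def fcVec (v : ℝ × ℝ → ℝ × ℝ) (ℓ : ℤ × ℤ) : ℂ × ℂ :=
  (fc (fun y => (v y).1) ℓ, fc (fun y => (v y).2) ℓ)

/-- `|v̂_ℓ|²`. -/
def coefAbsSq (v : ℝ × ℝ → ℝ × ℝ) (ℓ : ℤ × ℤ) : ℝ :=
  ‖fc (fun y => (v y).1) ℓ‖^2 + ‖fc (fun y => (v y).2) ℓ‖^2

/-- Squared homogeneous Sobolev norm `‖v‖²_{Ḣ^κ} = (2π)² Σ_{ℓ≠0} |ℓ|^{2κ}|v̂_ℓ|²`. -/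
def hnormSq (v : ℝ × ℝ → ℝ × ℝ) (κ : ℝ) : ℝ :=
  (2*π)^2 * ∑' ℓ : ℤ × ℤ,
    if ℓ = 0 then 0 else ((ℓ.1:ℝ)^2 + (ℓ.2:ℝ)^2) ^ κ * coefAbsSq v ℓ

/-- Homogeneous Sobolev norm `‖v‖_{Ḣ^κ}`. -/
def hnorm (v : ℝ × ℝ → ℝ × ℝ) (κ : ℝ) : ℝ := Real.sqrt (hnormSq v κ)

/-- Projection onto Fourier modes with `|ℓ| ≤ N` (scalar fields). -/
def PN (N : ℝ) (f : ℝ × ℝ → ℝ) (x : ℝ × ℝ) : ℝ :=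
  ∑' ℓ : ℤ × ℤ,
    if ((ℓ.1:ℝ)^2 + (ℓ.2:ℝ)^2) ≤ N^2 then
      (fc f ℓ * Complex.exp (Complex.I * ((ℓ.1:ℂ) * (x.1:ℂ) + (ℓ.2:ℂ) * (x.2:ℂ)))).re
    else 0

/-- Projection onto Fourier modes with `|ℓ| ≤ N` (vector fields). -/
def PNvec (N : ℝ) (v : ℝ × ℝ → ℝ × ℝ) (x : ℝ × ℝ) : ℝ × ℝ :=
  (PN N (fun y => (v y).1) x, PN N (fun y => (v y).2) x)

/-- High-mode part `(I − P_N)v`. -/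
def highN (N : ℝ) (v : ℝ × ℝ → ℝ × ℝ) (x : ℝ × ℝ) : ℝ × ℝ := v x - PNvec N v x

/-- `(v·∇)w` as a vector field. -/
def advVec (v w : ℝ × ℝ → ℝ × ℝ) (x : ℝ × ℝ) : ℝ × ℝ :=
  (adv v (fun y => (w y).1) x, adv v (fun y => (w y).2) x)

/-- Laplacian of a vector field. -/
def lapVec (v : ℝ × ℝ → ℝ × ℝ) (x : ℝ × ℝ) : ℝ × ℝ :=
  (lap (fun y => (v y).1) x, lap (fun y => (v y).2) x)

/-- Spatial mean `(2π)⁻² ∫_Ω v`. -/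
def meanOf (v : ℝ × ℝ → ℝ × ℝ) : ℝ × ℝ := ((2*π)^2)⁻¹ • ∫ x in Omega2, v x

/-- Joint smoothness in `(t,x)`. -/
def SmoothTS (u : ℝ → ℝ × ℝ → ℝ × ℝ) : Prop :=
  ∀ n : ℕ, ContDiff ℝ n (fun p : ℝ × (ℝ × ℝ) => u p.1 p.2)

/-- The 2D inviscid Burgers equation `∂ₜu + (u·∇)u = 0` on `[0,T] × ℝ²`. -/
def IsBurgers (T : ℝ) (u : ℝ → ℝ × ℝ → ℝ × ℝ) : Prop :=
  ∀ t ∈ Set.Icc (0:ℝ) T, ∀ x : ℝ × ℝ,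
    deriv (fun s => (u s x).1) t + adv (u t) (fun y => (u t y).1) x = 0 ∧
    deriv (fun s => (u s x).2) t + adv (u t) (fun y => (u t y).2) x = 0

/-- The 2D Kuramoto–Sivashinsky equation `∂ₜu + (u·∇)u = −Δ²u − λΔu` on `[0,T] × ℝ²`. -/
def IsKSE (lam T : ℝ) (u : ℝ → ℝ × ℝ → ℝ × ℝ) : Prop :=
  ∀ t ∈ Set.Icc (0:ℝ) T, ∀ x : ℝ × ℝ,
    deriv (fun s => (u s x).1) t + adv (u t) (fun y => (u t y).1) x
      = -(lap (lap (fun y => (u t y).1)) x) - lam * lap (fun y => (u t y).1) x ∧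
    deriv (fun s => (u s x).2) t + adv (u t) (fun y => (u t y).2) x
      = -(lap (lap (fun y => (u t y).2)) x) - lam * lap (fun y => (u t y).2) x

open scoped ContDiff

/-! ### Integrals over the box -/

lemma Omega2_compact : IsCompact Omega2 := isCompact_Icc.prod isCompact_Icc

lemma intOn_Omega {E : Type*} [NormedAddCommGroup E] {h : ℝ × ℝ → E} (hc : Continuous h) :
    IntegrableOn h Omega2 :=
  hc.continuousOn.integrableOn_compact Omega2_compact

lemma integral_Omega_fst {E : Type*} [NormedAddCommGroup E] [NormedSpace ℝ E]
    {h : ℝ × ℝ → E} (hc : Continuous h) :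
    ∫ x in Omega2, h x = ∫ x in (0 : ℝ)..(2 * π), ∫ y in (0 : ℝ)..(2 * π), h (x, y) := by
  have h0 : (0 : ℝ) ≤ 2 * π := by positivity
  have hi : IntegrableOn h (Icc (0:ℝ) (2*π) ×ˢ Icc (0:ℝ) (2*π)) (volume.prod volume) := by
    rw [← Measure.volume_eq_prod]; exact intOn_Omega hc
  have := setIntegral_prod h hi
  rw [← Measure.volume_eq_prod] at this
  rw [Omega2, this]
  simp only [intervalIntegral.integral_of_le h0, integral_Icc_eq_integral_Ioc]

lemma integral_Omega_snd {E : Type*} [NormedAddCommGroup E] [NormedSpace ℝ E]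
    {h : ℝ × ℝ → E} (hc : Continuous h) :
    ∫ x in Omega2, h x = ∫ y in (0 : ℝ)..(2 * π), ∫ x in (0 : ℝ)..(2 * π), h (x, y) := by
  have h1 := setIntegral_prod_swap (μ := (volume : Measure ℝ)) (ν := (volume : Measure ℝ))
    (Icc (0:ℝ) (2*π)) (Icc (0:ℝ) (2*π)) h
  rw [← Measure.volume_eq_prod] at h1
  rw [Omega2, ← h1]
  exact integral_Omega_fst (h := fun z => h z.swap) (hc.comp continuous_swap)

/-! ### Partial derivatives of smooth periodic fields -/

lemma pd1_eq {f : ℝ × ℝ → ℝ} (hf : ContDiff ℝ ∞ f) (x : ℝ × ℝ) :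
    HasDerivAt (fun s => f (s, x.2)) (fderiv ℝ f x (1, 0)) x.1 := by
  have h1 : HasFDerivAt f (fderiv ℝ f x) (x.1, x.2) :=
    (hf.differentiable (by simp) x).hasFDerivAt
  have h2 : HasDerivAt (fun s : ℝ => (s, x.2)) ((1 : ℝ), (0 : ℝ)) x.1 :=
    (hasDerivAt_id x.1).prodMk (hasDerivAt_const x.1 x.2)
  exact h1.comp_hasDerivAt x.1 h2

lemma pd2_eq {f : ℝ × ℝ → ℝ} (hf : ContDiff ℝ ∞ f) (x : ℝ × ℝ) :
    HasDerivAt (fun s => f (x.1, s)) (fderiv ℝ f x (0, 1)) x.2 := by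
  have h1 : HasFDerivAt f (fderiv ℝ f x) (x.1, x.2) :=
    (hf.differentiable (by simp) x).hasFDerivAt
  have h2 : HasDerivAt (fun s : ℝ => (x.1, s)) ((0 : ℝ), (1 : ℝ)) x.2 :=
    (hasDerivAt_const x.2 x.1).prodMk (hasDerivAt_id x.2)
  exact h1.comp_hasDerivAt x.2 h2

lemma hasDerivAt_pd1 {f : ℝ × ℝ → ℝ} (hf : ContDiff ℝ ∞ f) (a b : ℝ) :
    HasDerivAt (fun s => f (s, b)) (pd1 f (a, b)) a := by
  have h := pd1_eq hf (a, b)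
  rw [pd1, h.deriv]; exact h

lemma hasDerivAt_pd2 {f : ℝ × ℝ → ℝ} (hf : ContDiff ℝ ∞ f) (a b : ℝ) :
    HasDerivAt (fun s => f (a, s)) (pd2 f (a, b)) b := by
  have h := pd2_eq hf (a, b)
  rw [pd2, h.deriv]; exact h

lemma contDiff_pd1 {f : ℝ × ℝ → ℝ} (hf : ContDiff ℝ ∞ f) : ContDiff ℝ ∞ (pd1 f) := by
  have h : pd1 f = fun x => fderiv ℝ f x (1, 0) := funext fun x => (pd1_eq hf x).deriv
  rw [h]
  exact (hf.fderiv_right (m := ∞) (by simp)).clm_apply contDiff_const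

lemma contDiff_pd2 {f : ℝ × ℝ → ℝ} (hf : ContDiff ℝ ∞ f) : ContDiff ℝ ∞ (pd2 f) := by
  have h : pd2 f = fun x => fderiv ℝ f x (0, 1) := funext fun x => (pd2_eq hf x).deriv
  rw [h]
  exact (hf.fderiv_right (m := ∞) (by simp)).clm_apply contDiff_const

/-- Scalar counterpart of `Periodic2`, in curried form. -/
def PerS (f : ℝ × ℝ → ℝ) : Prop :=
  ∀ a b : ℝ, f (a + 2 * π, b) = f (a, b) ∧ f (a, b + 2 * π) = f (a, b)

lemma PerS.pd1 {f : ℝ × ℝ → ℝ} (hp : PerS f) : PerS (pd1 f) := by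
  intro a b
  constructor
  · have h : (fun s => f (s + 2 * π, b)) = fun s => f (s, b) := funext fun s => (hp s b).1
    change deriv (fun s => f (s, b)) (a + 2 * π) = deriv (fun s => f (s, b)) a
    rw [← deriv_comp_add_const (fun s => f (s, b)) (2 * π) a, h]
  · change deriv (fun s => f (s, b + 2 * π)) a = deriv (fun s => f (s, b)) a
    simp only [fun s => (hp s b).2]

lemma PerS.pd2 {f : ℝ × ℝ → ℝ} (hp : PerS f) : PerS (pd2 f) := by
  intro a b
  constructor
  · change deriv (fun s => f (a + 2 * π, s)) b = deriv (fun s => f (a, s)) b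
    simp only [fun s => (hp a s).1]
  · have h : (fun s => f (a, s + 2 * π)) = fun s => f (a, s) := funext fun s => (hp a s).2
    change deriv (fun s => f (a, s)) (b + 2 * π) = deriv (fun s => f (a, s)) b
    rw [← deriv_comp_add_const (fun s => f (a, s)) (2 * π) b, h]

lemma PerS.fst {f : ℝ × ℝ → ℝ} (hp : PerS f) (b : ℝ) : f (2 * π, b) = f (0, b) := by
  simpa using (hp 0 b).1

lemma PerS.snd {f : ℝ × ℝ → ℝ} (hp : PerS f) (a : ℝ) : f (a, 2 * π) = f (a, 0) := by
  simpa using (hp a 0).2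

/-! ### Integration by parts -/

/-- The integral over the box of the `x`-derivative of a periodic field vanishes. -/
lemma integral_deriv_fst {E : Type*} [NormedAddCommGroup E] [NormedSpace ℝ E] [CompleteSpace E]
    {h h' : ℝ × ℝ → E} (hc : Continuous h')
    (hd : ∀ a b, HasDerivAt (fun s => h (s, b)) (h' (a, b)) a)
    (hp : ∀ b, h (2 * π, b) = h (0, b)) : ∫ x in Omega2, h' x = 0 := by
  rw [integral_Omega_snd hc]
  have : ∀ b, ∫ a in (0:ℝ)..(2 * π), h' (a, b) = 0 := fun b => by
    rw [intervalIntegral.integral_eq_sub_of_hasDerivAt (f := fun s => h (s, b))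
      (fun a _ => hd a b)]
    · simp [hp]
    · exact (hc.comp (by fun_prop : Continuous fun a : ℝ => (a, b))).intervalIntegrable _ _
  simp [this]

lemma integral_deriv_snd {E : Type*} [NormedAddCommGroup E] [NormedSpace ℝ E] [CompleteSpace E]
    {h h' : ℝ × ℝ → E} (hc : Continuous h')
    (hd : ∀ a b, HasDerivAt (fun s => h (a, s)) (h' (a, b)) b)
    (hp : ∀ a, h (a, 2 * π) = h (a, 0)) : ∫ x in Omega2, h' x = 0 := by
  rw [integral_Omega_fst hc]
  have : ∀ a, ∫ b in (0:ℝ)..(2 * π), h' (a, b) = 0 := fun a => by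
    rw [intervalIntegral.integral_eq_sub_of_hasDerivAt (f := fun s => h (a, s))
      (fun b _ => hd a b)]
    · simp [hp]
    · exact (hc.comp (by fun_prop : Continuous fun b : ℝ => (a, b))).intervalIntegrable _ _
  simp [this]

lemma integral_grad_sq {f : ℝ × ℝ → ℝ} (hf : ContDiff ℝ ∞ f) (hp : PerS f) :
    (∫ x in Omega2, pd1 f x ^ 2) + (∫ x in Omega2, pd2 f x ^ 2)
      = -∫ x in Omega2, f x * lap f x := by
  have c0 := hf.continuous
  have c1 := (contDiff_pd1 hf).continuous
  have c2 := (contDiff_pd2 hf).continuous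
  have c11 := (contDiff_pd1 (contDiff_pd1 hf)).continuous
  have c22 := (contDiff_pd2 (contDiff_pd2 hf)).continuous
  have e1 := integral_deriv_fst (h := fun x => f x * pd1 f x)
    (h' := fun x => pd1 f x * pd1 f x + f x * pd1 (pd1 f) x) (by fun_prop)
    (fun a b => (hasDerivAt_pd1 hf a b).mul (hasDerivAt_pd1 (contDiff_pd1 hf) a b))
    (fun b => by simp only [hp.fst, hp.pd1.fst])
  have e2 := integral_deriv_snd (h := fun x => f x * pd2 f x)
    (h' := fun x => pd2 f x * pd2 f x + f x * pd2 (pd2 f) x) (by fun_prop)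
    (fun a b => (hasDerivAt_pd2 hf a b).mul (hasDerivAt_pd2 (contDiff_pd2 hf) a b))
    (fun b => by simp only [hp.snd, hp.pd2.snd])
  rw [integral_add (intOn_Omega (by fun_prop)) (intOn_Omega (by fun_prop))] at e1 e2
  simp only [lap, mul_add, sq]
  rw [integral_add (intOn_Omega (by fun_prop)) (intOn_Omega (by fun_prop))]
  linarith

/-! ### Fourier coefficients of derivatives -/

/-- The conjugate character `x ↦ exp(-iℓ·x)` in the form used by `fc`. -/
def chr (ℓ : ℤ × ℤ) (x : ℝ × ℝ) : ℂ :=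
  Complex.exp (-(Complex.I) * ((ℓ.1:ℂ) * (x.1:ℂ) + (ℓ.2:ℂ) * (x.2:ℂ)))

lemma continuous_chr (ℓ : ℤ × ℤ) : Continuous (chr ℓ) := by unfold chr; fun_prop

lemma chr_fst (ℓ : ℤ × ℤ) (b : ℝ) : chr ℓ (2 * π, b) = chr ℓ (0, b) := by
  unfold chr
  rw [Complex.exp_eq_exp_iff_exists_int]
  exact ⟨-ℓ.1, by push_cast; ring⟩

lemma chr_snd (ℓ : ℤ × ℤ) (a : ℝ) : chr ℓ (a, 2 * π) = chr ℓ (a, 0) := by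
  unfold chr
  rw [Complex.exp_eq_exp_iff_exists_int]
  exact ⟨-ℓ.2, by push_cast; ring⟩

lemma hasDerivAt_chr_fst (ℓ : ℤ × ℤ) (a b : ℝ) :
    HasDerivAt (fun s => chr ℓ (s, b)) (chr ℓ (a, b) * (-Complex.I * ℓ.1)) a := by
  have h : HasDerivAt (fun s : ℝ => (s : ℂ)) 1 a := Complex.ofRealCLM.hasDerivAt
  have := ((((h.const_mul (ℓ.1 : ℂ)).add_const ((ℓ.2 : ℂ) * (b : ℂ))).const_mul
    (-Complex.I))).cexp
  simpa [chr] using this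

lemma hasDerivAt_chr_snd (ℓ : ℤ × ℤ) (a b : ℝ) :
    HasDerivAt (fun s => chr ℓ (a, s)) (chr ℓ (a, b) * (-Complex.I * ℓ.2)) b := by
  have h : HasDerivAt (fun s : ℝ => (s : ℂ)) 1 b := Complex.ofRealCLM.hasDerivAt
  have := ((((h.const_mul (ℓ.2 : ℂ)).const_add ((ℓ.1 : ℂ) * (a : ℂ))).const_mul
    (-Complex.I))).cexp
  simpa [chr] using this

lemma fc_eq (f : ℝ × ℝ → ℝ) (ℓ : ℤ × ℤ) :
    fc f ℓ = ((2*π)^2)⁻¹ • ∫ x in Omega2, (f x : ℂ) * chr ℓ x := rfl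

lemma fc_pd1 {f : ℝ × ℝ → ℝ} (hf : ContDiff ℝ ∞ f) (hp : PerS f) (ℓ : ℤ × ℤ) :
    fc (pd1 f) ℓ = Complex.I * ℓ.1 * fc f ℓ := by
  have c0 := hf.continuous
  have c1 := (contDiff_pd1 hf).continuous
  have cc := continuous_chr ℓ
  have e := integral_deriv_fst (h := fun x => (f x : ℂ) * chr ℓ x)
    (h' := fun x => (pd1 f x : ℂ) * chr ℓ x + (f x : ℂ) * (chr ℓ x * (-Complex.I * ℓ.1)))
    (by fun_prop) (fun a b => (hasDerivAt_pd1 hf a b).ofReal_comp.mul (hasDerivAt_chr_fst ℓ a b))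
    (fun b => by simp only [hp.fst, chr_fst])
  rw [integral_add (intOn_Omega (by fun_prop)) (intOn_Omega (by fun_prop))] at e
  simp only [← mul_assoc] at e
  simp only [MeasureTheory.integral_mul_const] at e
  rw [fc_eq, fc_eq, mul_smul_comm]
  congr 1
  linear_combination e

lemma fc_pd2 {f : ℝ × ℝ → ℝ} (hf : ContDiff ℝ ∞ f) (hp : PerS f) (ℓ : ℤ × ℤ) :
    fc (pd2 f) ℓ = Complex.I * ℓ.2 * fc f ℓ := by
  have c0 := hf.continuous
  have c1 := (contDiff_pd2 hf).continuous
  have cc := continuous_chr ℓ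
  have e := integral_deriv_snd (h := fun x => (f x : ℂ) * chr ℓ x)
    (h' := fun x => (pd2 f x : ℂ) * chr ℓ x + (f x : ℂ) * (chr ℓ x * (-Complex.I * ℓ.2)))
    (by fun_prop) (fun a b => (hasDerivAt_pd2 hf a b).ofReal_comp.mul (hasDerivAt_chr_snd ℓ a b))
    (fun b => by simp only [hp.snd, chr_snd])
  rw [integral_add (intOn_Omega (by fun_prop)) (intOn_Omega (by fun_prop))] at e
  simp only [← mul_assoc] at e
  simp only [MeasureTheory.integral_mul_const] at e
  rw [fc_eq, fc_eq, mul_smul_comm]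
  congr 1
  linear_combination e

lemma fc_lap {f : ℝ × ℝ → ℝ} (hf : ContDiff ℝ ∞ f) (hp : PerS f) (ℓ : ℤ × ℤ) :
    fc (lap f) ℓ = -((ℓ.1:ℂ)^2 + (ℓ.2:ℂ)^2) * fc f ℓ := by
  have c11 := (contDiff_pd1 (contDiff_pd1 hf)).continuous
  have c22 := (contDiff_pd2 (contDiff_pd2 hf)).continuous
  have cc := continuous_chr ℓ
  have e : fc (lap f) ℓ = fc (pd1 (pd1 f)) ℓ + fc (pd2 (pd2 f)) ℓ := by
    simp only [fc_eq, lap, Complex.ofReal_add, add_mul]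
    rw [integral_add (intOn_Omega (by fun_prop)) (intOn_Omega (by fun_prop)), smul_add]
  rw [e, fc_pd1 (contDiff_pd1 hf) hp.pd1, fc_pd1 hf hp, fc_pd2 (contDiff_pd2 hf) hp.pd2,
    fc_pd2 hf hp]
  linear_combination ((ℓ.1:ℂ)^2 + (ℓ.2:ℂ)^2) * fc f ℓ * Complex.I_sq

lemma norm_fc_lap {f : ℝ × ℝ → ℝ} (hf : ContDiff ℝ ∞ f) (hp : PerS f) (ℓ : ℤ × ℤ) :
    ‖fc (lap f) ℓ‖ = ((ℓ.1:ℝ)^2 + (ℓ.2:ℝ)^2) * ‖fc f ℓ‖ := by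
  rw [fc_lap hf hp, norm_mul, norm_neg]
  congr 1
  have : ((ℓ.1:ℂ)^2 + (ℓ.2:ℂ)^2) = (((ℓ.1:ℝ)^2 + (ℓ.2:ℝ)^2 : ℝ) : ℂ) := by push_cast; rfl
  rw [this, Complex.norm_real, Real.norm_of_nonneg (by positivity)]

/-! ### Parseval's identity -/

lemma two_pi_pos' : (0 : ℝ) < 2 * π := by positivity

lemma fourierCoeffOn_two_pi (g : ℝ → ℂ) (n : ℤ) :
    fourierCoeffOn two_pi_pos' g n
      = (2 * π)⁻¹ • ∫ x in (0:ℝ)..(2 * π), Complex.exp (-(Complex.I) * ((n:ℂ) * (x:ℂ))) * g x := by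
  rw [fourierCoeffOn_eq_integral]
  simp only [sub_zero, one_div, smul_eq_mul]
  congr 1
  refine intervalIntegral.integral_congr fun x _ => ?_
  rw [fourier_coe_apply]
  congr 2
  have : (π : ℂ) ≠ 0 := by exact_mod_cast Real.pi_ne_zero
  push_cast
  rw [sub_zero]
  field_simp

lemma hasSum_sq_two_pi {g : ℝ → ℂ} (hg : Continuous g) :
    HasSum (fun n => ‖fourierCoeffOn two_pi_pos' g n‖ ^ 2)
      ((2 * π)⁻¹ * ∫ x in (0:ℝ)..(2 * π), ‖g x‖ ^ 2) := by
  have hL2 : MemLp g 2 (volume.restrict (Ioc 0 (2 * π))) := by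
    refine (memLp_two_iff_integrable_sq_norm hg.aestronglyMeasurable).2 ?_
    exact ((hg.norm.pow 2).integrableOn_Icc (a := 0) (b := 2 * π)).mono_set Ioc_subset_Icc_self
  simpa using hasSum_sq_fourierCoeffOn two_pi_pos' hL2

/-- Fourier coefficient in the first variable only. -/
def pcoef (f : ℝ × ℝ → ℝ) (m : ℤ) (y : ℝ) : ℂ :=
  fourierCoeffOn two_pi_pos' (fun x => (f (x, y) : ℂ)) m

lemma continuous_pcoef {f : ℝ × ℝ → ℝ} (hf : Continuous f) (m : ℤ) :
    Continuous (pcoef f m) := by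
  unfold pcoef
  simp only [fourierCoeffOn_two_pi]
  have h : Continuous fun y : ℝ => ∫ x in (0:ℝ)..(2 * π),
      Complex.exp (-(Complex.I) * ((m:ℂ) * (x:ℂ))) * (f (x, y) : ℂ) :=
    intervalIntegral.continuous_parametric_intervalIntegral_of_continuous' (by fun_prop) _ _
  exact h.const_smul ((2 * π)⁻¹ : ℝ)

lemma fourierCoeffOn_pcoef {f : ℝ × ℝ → ℝ} (hf : Continuous f) (m n : ℤ) :
    fourierCoeffOn two_pi_pos' (pcoef f m) n = fc f (m, n) := by
  have cc := continuous_chr (m, n)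
  rw [fourierCoeffOn_two_pi, fc_eq, integral_Omega_snd (by fun_prop)]
  simp only [pcoef, fourierCoeffOn_two_pi, mul_smul_comm, intervalIntegral.integral_smul,
    smul_smul]
  congr 1
  · ring
  · refine intervalIntegral.integral_congr fun y _ => ?_
    rw [← intervalIntegral.integral_const_mul]
    refine intervalIntegral.integral_congr fun x _ => ?_
    simp only [chr]
    rw [mul_add, Complex.exp_add]
    ring

/-- Parseval's identity on the box, obtained by applying the one-dimensional identity first in
`x` for fixed `y`, then in `y` for each partial coefficient. -/
lemma parseval {f : ℝ × ℝ → ℝ} (hf : Continuous f) :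
    HasSum (fun ℓ : ℤ × ℤ => (2 * π) ^ 2 * ‖fc f ℓ‖ ^ 2) (∫ x in Omega2, f x ^ 2) := by
  have hpi := Real.pi_pos
  have hin : ∀ m : ℤ, HasSum (fun n : ℤ => ‖fc f (m, n)‖ ^ 2)
      ((2 * π)⁻¹ * ∫ y in (0:ℝ)..(2 * π), ‖pcoef f m y‖ ^ 2) := fun m => by
    simpa only [fourierCoeffOn_pcoef hf] using hasSum_sq_two_pi (continuous_pcoef hf m)
  have hy : ∀ y : ℝ, HasSum (fun m : ℤ => ‖pcoef f m y‖ ^ 2)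
      ((2 * π)⁻¹ * ∫ x in (0:ℝ)..(2 * π), f (x, y) ^ 2) := fun y => by
    have := hasSum_sq_two_pi (g := fun x => (f (x, y) : ℂ)) (by fun_prop)
    simpa [pcoef] using this
  have hcont : Continuous fun y : ℝ => (2 * π)⁻¹ * ∫ x in (0:ℝ)..(2 * π), f (x, y) ^ 2 := by
    refine continuous_const.mul ?_
    exact intervalIntegral.continuous_parametric_intervalIntegral_of_continuous' (by fun_prop) _ _
  have hout : HasSum (fun m : ℤ => ∫ y in (0:ℝ)..(2 * π), ‖pcoef f m y‖ ^ 2)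
      (∫ y in (0:ℝ)..(2 * π), (2 * π)⁻¹ * ∫ x in (0:ℝ)..(2 * π), f (x, y) ^ 2) := by
    refine intervalIntegral.hasSum_integral_of_dominated_convergence
      (fun m y => ‖pcoef f m y‖ ^ 2) (fun m => ?_) (fun m => ?_) ?_ ?_ ?_
    · exact ((continuous_pcoef hf m).norm.pow 2).aestronglyMeasurable
    · exact Filter.Eventually.of_forall fun y _ => by simp
    · exact Filter.Eventually.of_forall fun y _ => (hy y).summable
    · simp only [fun y => (hy y).tsum_eq]
      exact hcont.intervalIntegrable _ _
    · exact Filter.Eventually.of_forall fun y _ => hy y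
  have hsum : Summable fun ℓ : ℤ × ℤ => ‖fc f ℓ‖ ^ 2 := by
    refine (summable_prod_of_nonneg fun ℓ => by positivity).2 ⟨fun m => (hin m).summable, ?_⟩
    simp only [fun m => (hin m).tsum_eq]
    exact (hout.mul_left _).summable
  have h1 := hsum.hasSum.prod_fiberwise hin
  have h2 := h1.unique (hout.mul_left _)
  have h3 := (hsum.hasSum).mul_left ((2 * π) ^ 2)
  have h4 : (2 * π) ^ 2 * ∑' ℓ : ℤ × ℤ, ‖fc f ℓ‖ ^ 2 = ∫ x in Omega2, f x ^ 2 := by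
    rw [h2, intervalIntegral.integral_const_mul, integral_Omega_snd (by fun_prop)]
    field_simp
  rwa [h4] at h3

/-! ### Spectral inequalities -/

/-- `‖f‖²_{Ḣ^{-2}}` of a scalar field. -/
def scalarNegSq (f : ℝ × ℝ → ℝ) : ℝ :=
  (2*π)^2 * ∑' ℓ : ℤ × ℤ,
    if ℓ = 0 then 0 else ((ℓ.1:ℝ)^2 + (ℓ.2:ℝ)^2) ^ (-2 : ℝ) * ‖fc f ℓ‖ ^ 2

lemma one_le_freq {ℓ : ℤ × ℤ} (h : ℓ ≠ 0) : (1 : ℝ) ≤ (ℓ.1:ℝ)^2 + (ℓ.2:ℝ)^2 := by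
  have : (1 : ℤ) ≤ ℓ.1 ^ 2 + ℓ.2 ^ 2 := by
    by_contra hlt
    have h1 : ℓ.1 = 0 := by nlinarith [sq_nonneg ℓ.1, sq_nonneg ℓ.2]
    have h2 : ℓ.2 = 0 := by nlinarith [sq_nonneg ℓ.1, sq_nonneg ℓ.2]
    exact h (Prod.ext h1 h2)
  exact_mod_cast this

lemma rpow_neg_two' {k : ℝ} : k ^ (-2 : ℝ) = (k ^ 2)⁻¹ := by
  rw [show (-2 : ℝ) = ((-2 : ℤ) : ℝ) by norm_num, Real.rpow_intCast]
  simp [zpow_neg]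

lemma summable_neg {f : ℝ × ℝ → ℝ} (hf : Continuous f) : Summable fun ℓ : ℤ × ℤ =>
    if ℓ = 0 then 0 else ((ℓ.1:ℝ)^2 + (ℓ.2:ℝ)^2) ^ (-2 : ℝ) * ‖fc f ℓ‖ ^ 2 := by
  have h := (parseval hf).summable
  refine Summable.of_nonneg_of_le (fun ℓ => ?_) (fun ℓ => ?_) h
  · split_ifs
    · rfl
    · positivity
  · split_ifs with h0
    · positivity
    · have h1 := one_le_freq h0
      have h2 : ((ℓ.1:ℝ)^2 + (ℓ.2:ℝ)^2) ^ (-2 : ℝ) ≤ 1 :=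
        Real.rpow_le_one_of_one_le_of_nonpos h1 (by norm_num)
      have h3 : (1 : ℝ) ≤ (2 * π) ^ 2 := by nlinarith [Real.pi_gt_three]
      gcongr
      linarith

lemma fc_zero {f : ℝ × ℝ → ℝ} (h : ∫ x in Omega2, f x = 0) : fc f 0 = 0 := by
  have : ∫ x in Omega2, (f x : ℂ) = ((∫ x in Omega2, f x : ℝ) : ℂ) := integral_ofReal
  simp [fc, this, h]

/-- Poincaré-type inequality `‖f‖ ≤ ‖Δf‖` for mean-free periodic `f`. -/
lemma l2_le_lap {f : ℝ × ℝ → ℝ} (hf : ContDiff ℝ ∞ f) (hp : PerS f)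
    (h0 : ∫ x in Omega2, f x = 0) :
    ∫ x in Omega2, f x ^ 2 ≤ ∫ x in Omega2, lap f x ^ 2 := by
  have cl : Continuous (lap f) := (contDiff_pd1 (contDiff_pd1 hf)).continuous.add
    (contDiff_pd2 (contDiff_pd2 hf)).continuous
  refine hasSum_le (fun ℓ => ?_) (parseval hf.continuous) (parseval cl)
  by_cases h : ℓ = 0
  · subst h
    rw [fc_zero h0]; simp; positivity
  · rw [norm_fc_lap hf hp]
    have := one_le_freq h
    gcongr
    exact le_mul_of_one_le_left (norm_nonneg _) this

/-- Interpolation of `L²` between `Ḣ²` and `Ḣ^{-2}`: Cauchy–Schwarz applied to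
`|f̂_ℓ|² = (|ℓ|²|f̂_ℓ|) · (|ℓ|^{-2}|f̂_ℓ|)`. -/
lemma l2_interp {f : ℝ × ℝ → ℝ} (hf : ContDiff ℝ ∞ f) (hp : PerS f)
    (h0 : ∫ x in Omega2, f x = 0) :
    ∫ x in Omega2, f x ^ 2 ≤ √(∫ x in Omega2, lap f x ^ 2) * √(scalarNegSq f) := by
  have cl : Continuous (lap f) := (contDiff_pd1 (contDiff_pd1 hf)).continuous.add
    (contDiff_pd2 (contDiff_pd2 hf)).continuous
  have hD := parseval cl
  have hH := (summable_neg hf.continuous).hasSum.mul_left ((2 * π) ^ 2)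
  refine hasSum_le_of_sum_le (parseval hf.continuous) fun s => ?_
  rw [← Real.sqrt_mul (integral_nonneg fun x => sq_nonneg _)]
  refine Real.le_sqrt_of_sq_le ?_
  have hD' := sum_le_hasSum s (fun ℓ _ => by positivity) hD
  have hnn : ∀ ℓ : ℤ × ℤ, 0 ≤ (2 * π) ^ 2 * (if ℓ = 0 then 0 else
      ((ℓ.1:ℝ)^2 + (ℓ.2:ℝ)^2) ^ (-2 : ℝ) * ‖fc f ℓ‖ ^ 2) := fun ℓ => by
    split_ifs <;> positivity
  have hH' := sum_le_hasSum s (fun ℓ _ => hnn ℓ) hH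
  refine le_trans ?_ (mul_le_mul hD' hH' (Finset.sum_nonneg fun ℓ _ => hnn ℓ)
    (integral_nonneg fun x => sq_nonneg _))
  refine Finset.sum_sq_le_sum_mul_sum_of_sq_le_mul s (fun ℓ _ => by positivity)
    (fun ℓ _ => hnn ℓ) fun ℓ _ => le_of_eq ?_
  by_cases h : ℓ = 0
  · subst h
    simp [fc_zero h0]
  · rw [norm_fc_lap hf hp, if_neg h, rpow_neg_two']
    have := one_le_freq h
    have : ((ℓ.1:ℝ)^2 + (ℓ.2:ℝ)^2) ≠ 0 := by positivity
    field_simp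

/-! ### Ladyzhenskaya's inequality -/

lemma cauchy_schwarz {f g : ℝ × ℝ → ℝ} (hf : Continuous f) (hg : Continuous g) :
    ∫ x in Omega2, |f x * g x| ≤ √(∫ x in Omega2, f x ^ 2) * √(∫ x in Omega2, g x ^ 2) := by
  have mem : ∀ {h : ℝ × ℝ → ℝ}, Continuous h →
      MemLp h (ENNReal.ofReal 2) (volume.restrict Omega2) := fun {h} hh => by
    rw [show ENNReal.ofReal 2 = 2 by simp]
    exact (memLp_two_iff_integrable_sq hh.aestronglyMeasurable).2 (intOn_Omega (by fun_prop))
  have := integral_mul_norm_le_Lp_mul_Lq Real.HolderConjugate.two_two (mem hf) (mem hg)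
  simpa [Real.sqrt_eq_rpow, abs_mul] using this

/-- One-dimensional Agmon-type bound on `[0, 2π]`: average
`g(x)² - g(s)² = 2 ∫ₛˣ g g'` over `s`. -/
lemma sq_le_line {g g' : ℝ → ℝ} (hc : Continuous g) (hc' : Continuous g')
    (hd : ∀ x, HasDerivAt g (g' x) x) {x : ℝ} (hx : x ∈ Icc (0:ℝ) (2 * π)) :
    g x ^ 2 ≤ ∫ s in (0:ℝ)..(2 * π), (g s ^ 2 + 2 * |g s * g' s|) := by
  have h0 : (0:ℝ) ≤ 2 * π := two_pi_pos'.le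
  have hint : ∀ {h : ℝ → ℝ} (_ : Continuous h) (a b : ℝ), IntervalIntegrable h volume a b :=
    fun hh a b => hh.intervalIntegrable a b
  set K := ∫ s in (0:ℝ)..(2 * π), 2 * |g s * g' s| with hK
  have key : ∀ s ∈ Icc (0:ℝ) (2 * π), g x ^ 2 ≤ g s ^ 2 + K := by
    intro s hs
    have e : ∫ t in s..x, 2 * (g t * g' t) = g x ^ 2 - g s ^ 2 :=
      intervalIntegral.integral_eq_sub_of_hasDerivAt (f := fun t => g t ^ 2)
        (fun t _ => by simpa [mul_assoc] using (hd t).fun_pow 2) (hint (by fun_prop) _ _)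
    have h1 : |∫ t in s..x, 2 * (g t * g' t)| ≤ |(∫ t in s..x, 2 * |g t * g' t|)| := by
      simpa [abs_mul] using
        intervalIntegral.norm_integral_le_abs_integral_norm (f := fun t => 2 * (g t * g' t))
          (a := s) (b := x) (μ := volume)
    have h2 : |(∫ t in s..x, 2 * |g t * g' t|)| ≤ |K| := by
      refine intervalIntegral.abs_integral_mono_interval ?_ ?_ (hint (by fun_prop) _ _)
      · rw [uIoc_of_le h0]
        exact Ioc_subset_Ioc (le_min hs.1 hx.1) (max_le hs.2 hx.2)
      · exact Filter.Eventually.of_forall fun t => by positivity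
    have h3 : |K| = K := abs_of_nonneg
      (intervalIntegral.integral_nonneg h0 fun t _ => by positivity)
    have h4 := le_abs_self (∫ t in s..x, 2 * (g t * g' t))
    linarith
  have avg := intervalIntegral.integral_mono_on h0 (hint (h := fun _ => g x ^ 2)
    (by fun_prop) 0 (2 * π)) (hint (h := fun s => g s ^ 2 + K) (by fun_prop) 0 (2 * π)) key
  rw [intervalIntegral.integral_add (hint (by fun_prop) _ _) (hint (by fun_prop) _ _)] at avg
  simp only [intervalIntegral.integral_const, sub_zero, smul_eq_mul] at avg
  rw [intervalIntegral.integral_add (hint (by fun_prop) _ _) (hint (by fun_prop) _ _), ← hK]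
  have hI : 0 ≤ ∫ s in (0:ℝ)..(2 * π), g s ^ 2 :=
    intervalIntegral.integral_nonneg h0 fun t _ => by positivity
  have hpi := Real.pi_gt_three
  by_contra hcon
  push Not at hcon
  nlinarith

/-- Ladyzhenskaya's argument: `F²` is bounded by a function of `y` alone and `G²` by a function
of `x` alone, so the integral of `F²G²` factorizes. -/
lemma ladyzhenskaya {F G : ℝ × ℝ → ℝ} (hF : ContDiff ℝ ∞ F) (hG : ContDiff ℝ ∞ G) :
    ∫ x in Omega2, (F x * G x) ^ 2 ≤
      (∫ x in Omega2, (F x ^ 2 + 2 * |F x * pd1 F x|)) *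
      (∫ x in Omega2, (G x ^ 2 + 2 * |G x * pd2 G x|)) := by
  have cF := hF.continuous
  have cG := hG.continuous
  have cF1 := (contDiff_pd1 hF).continuous
  have cG2 := (contDiff_pd2 hG).continuous
  have h0 : (0:ℝ) ≤ 2 * π := two_pi_pos'.le
  set P : ℝ → ℝ := fun b => ∫ a in (0:ℝ)..(2 * π), (F (a, b) ^ 2 + 2 * |F (a, b) * pd1 F (a, b)|)
    with hP
  set Q : ℝ → ℝ := fun a => ∫ b in (0:ℝ)..(2 * π), (G (a, b) ^ 2 + 2 * |G (a, b) * pd2 G (a, b)|)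
    with hQ
  have cP : Continuous P :=
    intervalIntegral.continuous_parametric_intervalIntegral_of_continuous' (by fun_prop) _ _
  have cQ : Continuous Q :=
    intervalIntegral.continuous_parametric_intervalIntegral_of_continuous' (by fun_prop) _ _
  have e : (∫ x in Omega2, (F x ^ 2 + 2 * |F x * pd1 F x|)) *
      (∫ x in Omega2, (G x ^ 2 + 2 * |G x * pd2 G x|)) = ∫ x in Omega2, Q x.1 * P x.2 := by
    rw [integral_Omega_snd (h := fun x => F x ^ 2 + 2 * |F x * pd1 F x|) (by fun_prop),
      integral_Omega_fst (h := fun x => G x ^ 2 + 2 * |G x * pd2 G x|) (by fun_prop),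
      integral_Omega_fst (by fun_prop)]
    simp only [intervalIntegral.integral_const_mul, intervalIntegral.integral_mul_const]
    rw [mul_comm]
  rw [e]
  refine setIntegral_mono_on (intOn_Omega (by fun_prop)) (intOn_Omega (by fun_prop))
    Omega2_compact.measurableSet fun x hx => ?_
  have b1 : F x ^ 2 ≤ P x.2 := sq_le_line (g := fun s => F (s, x.2))
    (g' := fun s => pd1 F (s, x.2)) (by fun_prop) (by fun_prop)
    (fun s => hasDerivAt_pd1 hF s x.2) hx.1
  have b2 : G x ^ 2 ≤ Q x.1 := sq_le_line (g := fun s => G (x.1, s))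
    (g' := fun s => pd2 G (x.1, s)) (by fun_prop) (by fun_prop)
    (fun s => hasDerivAt_pd2 hG x.1 s) hx.2
  rw [mul_pow, mul_comm]
  exact mul_le_mul b2 b1 (sq_nonneg _) ((sq_nonneg _).trans b2)

/-- Trilinear bound for one term of `((u·∇)u)·u`, in terms of common bounds `p`, `r` for the
`L²` norms of the factors and of their first derivatives. -/
lemma term_bound {F G H : ℝ × ℝ → ℝ} (hF : ContDiff ℝ ∞ F) (hG : ContDiff ℝ ∞ G)
    (hH : Continuous H) {p r : ℝ}
    (hFp : √(∫ x in Omega2, F x ^ 2) ≤ p) (hGp : √(∫ x in Omega2, G x ^ 2) ≤ p)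
    (hFr : √(∫ x in Omega2, pd1 F x ^ 2) ≤ r) (hGr : √(∫ x in Omega2, pd2 G x ^ 2) ≤ r)
    (hHr : √(∫ x in Omega2, H x ^ 2) ≤ r) :
    |∫ x in Omega2, F x * G x * H x| ≤ (p ^ 2 + 2 * (p * r)) * r := by
  have cF := hF.continuous
  have cG := hG.continuous
  have cF1 := (contDiff_pd1 hF).continuous
  have cG2 := (contDiff_pd2 hG).continuous
  have hp : 0 ≤ p := (Real.sqrt_nonneg _).trans hFp
  have hr : 0 ≤ r := (Real.sqrt_nonneg _).trans hFr
  have half : ∀ {f g : ℝ × ℝ → ℝ}, Continuous f → Continuous g →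
      √(∫ x in Omega2, f x ^ 2) ≤ p → √(∫ x in Omega2, g x ^ 2) ≤ r →
      ∫ x in Omega2, (f x ^ 2 + 2 * |f x * g x|) ≤ p ^ 2 + 2 * (p * r) := by
    intro f g cf cg hf hg
    rw [integral_add (intOn_Omega (by fun_prop)) (intOn_Omega (by fun_prop)),
      MeasureTheory.integral_const_mul]
    have h1 : ∫ x in Omega2, f x ^ 2 ≤ p ^ 2 := (Real.sqrt_le_left hp).1 hf
    have h2 := (cauchy_schwarz cf cg).trans
      (mul_le_mul hf hg (Real.sqrt_nonneg _) hp)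
    linarith
  have hL : √(∫ x in Omega2, (F x * G x) ^ 2) ≤ p ^ 2 + 2 * (p * r) := by
    refine Real.sqrt_le_iff.2 ⟨by positivity, (ladyzhenskaya hF hG).trans ?_⟩
    rw [sq]
    exact mul_le_mul (half cF cF1 hFp hFr) (half cG cG2 hGp hGr)
      (integral_nonneg fun x => by positivity) (by positivity)
  calc |∫ x in Omega2, F x * G x * H x| ≤ ∫ x in Omega2, |F x * G x * H x| :=
        abs_integral_le_integral_abs
    _ ≤ √(∫ x in Omega2, (F x * G x) ^ 2) * √(∫ x in Omega2, H x ^ 2) :=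
        cauchy_schwarz (f := fun x => F x * G x) (by fun_prop) hH
    _ ≤ _ := mul_le_mul hL hHr (Real.sqrt_nonneg _) (by positivity)

/-! ### The trilinear estimate -/

/-- `‖∇f‖² ≤ ‖f‖‖Δf‖`, for each partial derivative. -/
lemma grad_interp {f : ℝ × ℝ → ℝ} (hf : ContDiff ℝ ∞ f) (hp : PerS f) :
    (∫ x in Omega2, pd1 f x ^ 2) ≤
        √(∫ x in Omega2, f x ^ 2) * √(∫ x in Omega2, lap f x ^ 2) ∧
    (∫ x in Omega2, pd2 f x ^ 2) ≤
        √(∫ x in Omega2, f x ^ 2) * √(∫ x in Omega2, lap f x ^ 2) := by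
  have cl : Continuous (lap f) := (contDiff_pd1 (contDiff_pd1 hf)).continuous.add
    (contDiff_pd2 (contDiff_pd2 hf)).continuous
  have h := integral_grad_sq hf hp
  have h1 : |∫ x in Omega2, f x * lap f x| ≤ ∫ x in Omega2, |f x * lap f x| :=
    abs_integral_le_integral_abs
  have h2 := cauchy_schwarz hf.continuous cl
  have h3 := neg_le_abs (∫ x in Omega2, f x * lap f x)
  have h4 : 0 ≤ ∫ x in Omega2, pd1 f x ^ 2 := integral_nonneg fun x => sq_nonneg _
  have h5 : 0 ≤ ∫ x in Omega2, pd2 f x ^ 2 := integral_nonneg fun x => sq_nonneg _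
  constructor <;> linarith

lemma scalarNegSq_nonneg (f : ℝ × ℝ → ℝ) : 0 ≤ scalarNegSq f := by
  refine mul_nonneg (by positivity) (tsum_nonneg fun ℓ => ?_)
  split_ifs <;> positivity

lemma hnormSq_neg_two {u : ℝ × ℝ → ℝ × ℝ} (h1 : Continuous fun z => (u z).1)
    (h2 : Continuous fun z => (u z).2) :
    hnormSq u (-2) = scalarNegSq (fun z => (u z).1) + scalarNegSq (fun z => (u z).2) := by
  rw [hnormSq, scalarNegSq, scalarNegSq, ← mul_add,
    ← (summable_neg h1).tsum_add (summable_neg h2)]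
  congr 2
  funext ℓ
  simp only [coefAbsSq]
  split_ifs <;> ring

/-- Critical trilinear estimate: there is `C > 0` such that for every smooth
2π-periodic mean-free vector field `u`,
`|∫_Ω ((u·∇)u)·u| ≤ C ‖Δu‖²_{L²} ‖u‖_{Ḣ^{−2}}`. -/
theorem stmt12 :
    ∃ C : ℝ, 0 < C ∧
      ∀ u : ℝ × ℝ → ℝ × ℝ, (∀ n : ℕ, ContDiff ℝ n u) → Periodic2 u →
        (∫ x in Omega2, u x) = 0 →
        |∫ x in Omega2,
            (adv u (fun z => (u z).1) x * (u x).1 + adv u (fun z => (u z).2) x * (u x).2)|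
          ≤ C * l2sqLap u * hnorm u (-2) := by
  refine ⟨24, by norm_num, fun u hu hper hmean => ?_⟩
  have hu' : ContDiff ℝ ∞ u := contDiff_infty.2 hu
  set f : ℝ × ℝ → ℝ := fun z => (u z).1 with hfdef
  set g : ℝ × ℝ → ℝ := fun z => (u z).2 with hgdef
  have hf : ContDiff ℝ ∞ f := hu'.fst
  have hg : ContDiff ℝ ∞ g := hu'.snd
  have pf : PerS f := fun a b =>
    ⟨congrArg Prod.fst (hper (a, b)).1, congrArg Prod.fst (hper (a, b)).2⟩
  have pg : PerS g := fun a b =>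
    ⟨congrArg Prod.snd (hper (a, b)).1, congrArg Prod.snd (hper (a, b)).2⟩
  have iu : Integrable u (volume.restrict Omega2) := intOn_Omega hu'.continuous
  have mf : ∫ x in Omega2, f x = 0 := by
    rw [hfdef, ← fst_integral iu, hmean]; rfl
  have mg : ∫ x in Omega2, g x = 0 := by
    rw [hgdef, ← snd_integral iu, hmean]; rfl
  have cf := hf.continuous
  have cg := hg.continuous
  have cf1 := (contDiff_pd1 hf).continuous
  have cf2 := (contDiff_pd2 hf).continuous
  have cg1 := (contDiff_pd1 hg).continuous
  have cg2 := (contDiff_pd2 hg).continuous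
  have clf : Continuous (lap f) := (contDiff_pd1 (contDiff_pd1 hf)).continuous.add
    (contDiff_pd2 (contDiff_pd2 hf)).continuous
  have clg : Continuous (lap g) := (contDiff_pd1 (contDiff_pd1 hg)).continuous.add
    (contDiff_pd2 (contDiff_pd2 hg)).continuous
  have hnn : ∀ h : ℝ × ℝ → ℝ, 0 ≤ ∫ x in Omega2, h x ^ 2 :=
    fun h => integral_nonneg fun x => sq_nonneg _
  have hD : l2sqLap u = (∫ x in Omega2, lap f x ^ 2) + ∫ x in Omega2, lap g x ^ 2 :=
    integral_add (intOn_Omega (by fun_prop)) (intOn_Omega (by fun_prop))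
  have hH : hnorm u (-2) = √(scalarNegSq f + scalarNegSq g) := by
    rw [hnorm, hnormSq_neg_two cf cg]
  set D := l2sqLap u
  set N := hnorm u (-2)
  have hNf : √(scalarNegSq f) ≤ N := by
    rw [hH]; exact Real.sqrt_le_sqrt (by linarith [scalarNegSq_nonneg g])
  have hNg : √(scalarNegSq g) ≤ N := by
    rw [hH]; exact Real.sqrt_le_sqrt (by linarith [scalarNegSq_nonneg f])
  have hN : 0 ≤ N := Real.sqrt_nonneg _
  set q := √D with hq
  have hq0 : 0 ≤ q := Real.sqrt_nonneg _
  have hD0 : 0 ≤ D := by rw [hD]; exact add_nonneg (hnn _) (hnn _)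
  have hqsq : q ^ 2 = D := Real.sq_sqrt hD0
  have hqf : √(∫ x in Omega2, lap f x ^ 2) ≤ q :=
    Real.sqrt_le_sqrt (by linarith [hnn (lap g)])
  have hqg : √(∫ x in Omega2, lap g x ^ 2) ≤ q :=
    Real.sqrt_le_sqrt (by linarith [hnn (lap f)])
  set A := (∫ x in Omega2, f x ^ 2) + ∫ x in Omega2, g x ^ 2 with hA
  set p := √A with hpdef
  have hp0 : 0 ≤ p := Real.sqrt_nonneg _
  have hpsq : p ^ 2 = A := Real.sq_sqrt (add_nonneg (hnn _) (hnn _))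
  have hpf : √(∫ x in Omega2, f x ^ 2) ≤ p := Real.sqrt_le_sqrt (by linarith [hnn g])
  have hpg : √(∫ x in Omega2, g x ^ 2) ≤ p := Real.sqrt_le_sqrt (by linarith [hnn f])
  have hpq : p ≤ q := Real.sqrt_le_sqrt (by linarith [l2_le_lap hf pf mf, l2_le_lap hg pg mg])
  have hAN : p ^ 2 ≤ 2 * (q * N) := by
    have h1 := (l2_interp hf pf mf).trans (mul_le_mul hqf hNf (Real.sqrt_nonneg _) hq0)
    have h2 := (l2_interp hg pg mg).trans (mul_le_mul hqg hNg (Real.sqrt_nonneg _) hq0)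
    linarith
  set r := √(p * q) with hr
  have hr0 : 0 ≤ r := Real.sqrt_nonneg _
  have hrsq : r ^ 2 = p * q := Real.sq_sqrt (mul_nonneg hp0 hq0)
  have hrq : r ≤ q := Real.sqrt_le_iff.2 ⟨hq0, by nlinarith⟩
  have gf : √(∫ x in Omega2, f x ^ 2) * √(∫ x in Omega2, lap f x ^ 2) ≤ p * q :=
    mul_le_mul hpf hqf (Real.sqrt_nonneg _) hp0
  have gg : √(∫ x in Omega2, g x ^ 2) * √(∫ x in Omega2, lap g x ^ 2) ≤ p * q :=
    mul_le_mul hpg hqg (Real.sqrt_nonneg _) hp0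
  have rf1 := Real.sqrt_le_sqrt ((grad_interp hf pf).1.trans gf)
  have rf2 := Real.sqrt_le_sqrt ((grad_interp hf pf).2.trans gf)
  have rg1 := Real.sqrt_le_sqrt ((grad_interp hg pg).1.trans gg)
  have rg2 := Real.sqrt_le_sqrt ((grad_interp hg pg).2.trans gg)
  have t1 := term_bound hf hf cf1 hpf hpf rf1 rf2 rf1
  have t2 := term_bound hg hf cf2 hpg hpf rg1 rf2 rf2
  have t3 := term_bound hf hg cg1 hpf hpg rf1 rg2 rg1
  have t4 := term_bound hg hg cg2 hpg hpg rg1 rg2 rg2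
  have split : ∫ x in Omega2, (adv u f x * (u x).1 + adv u g x * (u x).2)
      = (∫ x in Omega2, f x * f x * pd1 f x) + (∫ x in Omega2, g x * f x * pd2 f x)
        + (∫ x in Omega2, f x * g x * pd1 g x) + ∫ x in Omega2, g x * g x * pd2 g x := by
    rw [← integral_add (intOn_Omega (by fun_prop)) (intOn_Omega (by fun_prop)),
      ← integral_add (intOn_Omega (by fun_prop)) (intOn_Omega (by fun_prop)),
      ← integral_add (intOn_Omega (by fun_prop)) (intOn_Omega (by fun_prop))]
    congr 1
    funext x
    simp only [adv, hfdef, hgdef]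
    ring
  rw [split]
  -- With `r² = pq` and `r ≤ q`, each term is at most `p²r + 2pr² ≤ 3p²q ≤ 6q²N`.
  have fin : (p ^ 2 + 2 * (p * r)) * r ≤ 6 * (D * N) := by
    have e : (p ^ 2 + 2 * (p * r)) * r = p ^ 2 * r + 2 * (p ^ 2 * q) := by
      linear_combination 2 * p * hrsq
    have h1 : p ^ 2 * r ≤ p ^ 2 * q := by gcongr
    have h2 : p ^ 2 * q ≤ 2 * (q * N) * q := by gcongr
    rw [e, ← hqsq]
    nlinarith
  calc _ ≤ |∫ x in Omega2, f x * f x * pd1 f x| + |∫ x in Omega2, g x * f x * pd2 f x|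
        + |∫ x in Omega2, f x * g x * pd1 g x| + |∫ x in Omega2, g x * g x * pd2 g x| :=
        (abs_add_le _ _).trans (by gcongr; exact abs_add_three _ _ _)
    _ ≤ 24 * D * N := by linarith
end
end

section
/- For each α ∈ [0,2) there exists a constant C₀ > 0 such that for every smooth vector field u : ℝ² → ℝ² that is 2π-periodic in each coordinate and mean-free (∫_Ω u dx = 0), one has | ∫_Ω ((u·∇)u)·u dx | ≤ (1/2) ‖Δu‖²_{L²(Ω)} + C₀ ‖u‖_{Ḣ^{−α}}^{4/(2−α)} ‖u‖²_{L²(Ω)}. -/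
/-!
Write `L = ‖u‖_{L²}`, `A = ‖Δu‖_{L²}`, `H = ‖u‖_{Ḣ^{-α}}`. Two estimates carry the proof.

* `advection_le`: `|∫ ((u·∇)u)·u| ≤ 12 L² A`. Each of the four terms `∫ f g ∂h` is bounded by
  Cauchy–Schwarz and an anisotropic Ladyzhenskaya inequality (`integral_sq_mul_sq_le`): `f²` is
  dominated by a function of `y` alone and `g²` by a function of `x` alone, both coming from the
  one-dimensional bound `sq_le_mean_add`. The gradients are then removed with
  `‖∇f‖² = -∫ f Δf ≤ ‖f‖ ‖Δf‖`, and the lower-order term with `L ≤ A`, which holds as `u` is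
  mean-free.
* `l2sq_interp`: `L² ≤ S^α H² + S⁻² A²` for every `S > 0`. By Parseval (`hasSum_sq_fc`) this is the
  modewise inequality `1 ≤ (S/|ℓ|²)^α + (|ℓ|²/S)²`, of which one summand is always at least `1`.

They are combined in `absorb`. If `24 L² ≤ A`, then `12 L² A ≤ A²/2`. Otherwise the
interpolation inequality at `S² = 48 A` has its last term equal to `A/48 < L²/2`, and what remains
gives `A ≤ C H^{4/(2-α)}`.
-/


open Real MeasureTheory Set intervalIntegral
open scoped Real Classical

noncomputable section

/-! ### Integration over the periodic box -/

section Box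

variable {E : Type*} [NormedAddCommGroup E]

lemma integrableOn_Omega2 {F : ℝ × ℝ → E} (hF : Continuous F) : IntegrableOn F Omega2 :=
  hF.continuousOn.integrableOn_compact (isCompact_Icc.prod isCompact_Icc)

variable [NormedSpace ℝ E]

lemma integral_Omega2_eq_xy {F : ℝ × ℝ → E} (hF : Continuous F) :
    ∫ p in Omega2, F p = ∫ x in 0..2 * π, ∫ y in 0..2 * π, F (x, y) := by
  have h := integrableOn_Omega2 hF
  have h2 : (0 : ℝ) ≤ 2 * π := by positivity
  unfold Omega2 at h ⊢
  rw [Measure.volume_eq_prod] at h ⊢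
  rw [setIntegral_prod F h]
  simp only [intervalIntegral.integral_of_le h2, integral_Icc_eq_integral_Ioc]

lemma integral_Omega2_eq_yx {F : ℝ × ℝ → E} (hF : Continuous F) :
    ∫ p in Omega2, F p = ∫ y in 0..2 * π, ∫ x in 0..2 * π, F (x, y) := by
  refine Eq.trans ?_
    (integral_Omega2_eq_xy (F := fun p : ℝ × ℝ => F p.swap) (hF.comp continuous_swap))
  unfold Omega2
  rw [Measure.volume_eq_prod]
  exact (setIntegral_prod_swap _ _ F).symm

end Box

/-- Cauchy–Schwarz on the box, in squared form. -/
lemma sq_integral_mul_le {f g : ℝ × ℝ → ℝ} (hf : Continuous f) (hg : Continuous g) :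
    (∫ p in Omega2, f p * g p) ^ 2 ≤ (∫ p in Omega2, f p ^ 2) * ∫ p in Omega2, g p ^ 2 := by
  have key : ∀ t : ℝ, 0 ≤ (∫ p in Omega2, g p ^ 2) * (t * t) +
      (2 * ∫ p in Omega2, f p * g p) * t + ∫ p in Omega2, f p ^ 2 := by
    intro t
    have h0 : 0 ≤ ∫ p in Omega2, (g p ^ 2 * (t * t) + 2 * (f p * g p) * t + f p ^ 2) :=
      integral_nonneg fun p => by
        have := sq_nonneg (f p + t * g p)
        simp only [Pi.zero_apply]
        linarith
    rw [integral_add (integrableOn_Omega2 (by fun_prop)) (integrableOn_Omega2 (by fun_prop)),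
      integral_add (integrableOn_Omega2 (by fun_prop)) (integrableOn_Omega2 (by fun_prop)),
      MeasureTheory.integral_mul_const, MeasureTheory.integral_mul_const,
      MeasureTheory.integral_const_mul] at h0
    exact h0
  have := discrim_le_zero key
  unfold discrim at this
  linarith

lemma integral_mul_le_sqrt {f g : ℝ × ℝ → ℝ} (hf : Continuous f) (hg : Continuous g) :
    |∫ p in Omega2, f p * g p| ≤ √(∫ p in Omega2, f p ^ 2) * √(∫ p in Omega2, g p ^ 2) := by
  rw [← Real.sqrt_mul (integral_nonneg fun p => sq_nonneg _)]
  exact Real.abs_le_sqrt (sq_integral_mul_le hf hg)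

/-! ### Smooth periodic scalar fields -/

/-- Smooth scalar fields on the plane that are `2π`-periodic in each coordinate. -/
structure SmoothPer (f : ℝ × ℝ → ℝ) : Prop where
  smooth : ∀ n : ℕ, ContDiff ℝ n f
  per1 : ∀ x y, f (x + 2 * π, y) = f (x, y)
  per2 : ∀ x y, f (x, y + 2 * π) = f (x, y)

namespace SmoothPer

variable {f g : ℝ × ℝ → ℝ}

lemma cont (hf : SmoothPer f) : Continuous f := (hf.smooth 0).continuous

lemma diff (hf : SmoothPer f) : Differentiable ℝ f := (hf.smooth 1).differentiable (by simp)

lemma hasDerivAt_fderiv1 (hf : SmoothPer f) (x y : ℝ) :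
    HasDerivAt (fun s => f (s, y)) (fderiv ℝ f (x, y) (1, 0)) x := by
  have h : HasDerivAt (fun s : ℝ => (s, y)) ((1 : ℝ), (0 : ℝ)) x :=
    (hasDerivAt_id x).prodMk (hasDerivAt_const x y)
  exact (hf.diff (x, y)).hasFDerivAt.comp_hasDerivAt x h

lemma hasDerivAt_fderiv2 (hf : SmoothPer f) (x y : ℝ) :
    HasDerivAt (fun s => f (x, s)) (fderiv ℝ f (x, y) (0, 1)) y := by
  have h : HasDerivAt (fun s : ℝ => (x, s)) ((0 : ℝ), (1 : ℝ)) y :=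
    (hasDerivAt_const y x).prodMk (hasDerivAt_id y)
  exact (hf.diff (x, y)).hasFDerivAt.comp_hasDerivAt y h

lemma pd1_eq (hf : SmoothPer f) : pd1 f = fun p => fderiv ℝ f p (1, 0) := by
  funext p
  exact (hf.hasDerivAt_fderiv1 p.1 p.2).deriv

lemma pd2_eq (hf : SmoothPer f) : pd2 f = fun p => fderiv ℝ f p (0, 1) := by
  funext p
  exact (hf.hasDerivAt_fderiv2 p.1 p.2).deriv

lemma hasDerivAt1 (hf : SmoothPer f) (x y : ℝ) :
    HasDerivAt (fun s => f (s, y)) (pd1 f (x, y)) x := by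
  rw [hf.pd1_eq]; exact hf.hasDerivAt_fderiv1 x y

lemma hasDerivAt2 (hf : SmoothPer f) (x y : ℝ) :
    HasDerivAt (fun s => f (x, s)) (pd2 f (x, y)) y := by
  rw [hf.pd2_eq]; exact hf.hasDerivAt_fderiv2 x y

protected lemma pd1 (hf : SmoothPer f) : SmoothPer (pd1 f) where
  smooth n := by
    rw [hf.pd1_eq]
    exact ((hf.smooth (n + 1)).fderiv_right (m := n) (by norm_cast)).clm_apply contDiff_const
  per1 x y := by
    have h := (hf.hasDerivAt1 (x + 2 * π) y).comp_add_const x (2 * π)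
    simp only [hf.per1] at h
    exact h.unique (hf.hasDerivAt1 x y)
  per2 x y := by
    have h := hf.hasDerivAt1 x (y + 2 * π)
    simp only [hf.per2] at h
    exact h.unique (hf.hasDerivAt1 x y)

protected lemma pd2 (hf : SmoothPer f) : SmoothPer (pd2 f) where
  smooth n := by
    rw [hf.pd2_eq]
    exact ((hf.smooth (n + 1)).fderiv_right (m := n) (by norm_cast)).clm_apply contDiff_const
  per1 x y := by
    have h := hf.hasDerivAt2 (x + 2 * π) y
    simp only [hf.per1] at h
    exact h.unique (hf.hasDerivAt2 x y)
  per2 x y := by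
    have h := (hf.hasDerivAt2 x (y + 2 * π)).comp_add_const y (2 * π)
    simp only [hf.per2] at h
    exact h.unique (hf.hasDerivAt2 x y)

lemma cont_lap (hf : SmoothPer f) : Continuous (lap f) :=
  hf.pd1.pd1.cont.add hf.pd2.pd2.cont

/-- Integration by parts in the first variable; periodicity kills the boundary terms. -/
lemma parts1 (hf : SmoothPer f) (hg : SmoothPer g) :
    ∫ p in Omega2, f p * pd1 g p = -∫ p in Omega2, pd1 f p * g p := by
  have c1 := hf.cont
  have c2 := hg.cont
  have c3 := hf.pd1.cont
  have c4 := hg.pd1.cont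
  rw [eq_neg_iff_add_eq_zero, ← integral_add (integrableOn_Omega2 (by fun_prop))
    (integrableOn_Omega2 (by fun_prop)), integral_Omega2_eq_yx (by fun_prop)]
  have h : ∀ y, ∫ x in 0..2 * π, (f (x, y) * pd1 g (x, y) + pd1 f (x, y) * g (x, y)) = 0 := by
    intro y
    rw [intervalIntegral.integral_eq_sub_of_hasDerivAt (f := fun x => f (x, y) * g (x, y))]
    · have e1 := hf.per1 0 y
      have e2 := hg.per1 0 y
      simp only [zero_add] at e1 e2
      rw [e1, e2, sub_self]
    · intro x _
      exact ((hf.hasDerivAt1 x y).mul (hg.hasDerivAt1 x y)).congr_deriv (by ring)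
    · exact Continuous.intervalIntegrable (by fun_prop) _ _
  simp [h]

/-- Integration by parts in the second variable. -/
lemma parts2 (hf : SmoothPer f) (hg : SmoothPer g) :
    ∫ p in Omega2, f p * pd2 g p = -∫ p in Omega2, pd2 f p * g p := by
  have c1 := hf.cont
  have c2 := hg.cont
  have c3 := hf.pd2.cont
  have c4 := hg.pd2.cont
  rw [eq_neg_iff_add_eq_zero, ← integral_add (integrableOn_Omega2 (by fun_prop))
    (integrableOn_Omega2 (by fun_prop)), integral_Omega2_eq_xy (by fun_prop)]
  have h : ∀ x, ∫ y in 0..2 * π, (f (x, y) * pd2 g (x, y) + pd2 f (x, y) * g (x, y)) = 0 := by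
    intro x
    rw [intervalIntegral.integral_eq_sub_of_hasDerivAt (f := fun y => f (x, y) * g (x, y))]
    · have e1 := hf.per2 x 0
      have e2 := hg.per2 x 0
      simp only [zero_add] at e1 e2
      rw [e1, e2, sub_self]
    · intro y _
      exact ((hf.hasDerivAt2 x y).mul (hg.hasDerivAt2 x y)).congr_deriv (by ring)
    · exact Continuous.intervalIntegrable (by fun_prop) _ _
  simp [h]

/-- `‖∇f‖² = -∫ f Δf ≤ ‖f‖ ‖Δf‖`. -/
lemma grad_le (hf : SmoothPer f) :
    (∫ p in Omega2, pd1 f p ^ 2) + ∫ p in Omega2, pd2 f p ^ 2 ≤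
      √(∫ p in Omega2, f p ^ 2) * √(∫ p in Omega2, lap f p ^ 2) := by
  have c1 := hf.cont
  have c2 := hf.pd1.pd1.cont
  have c3 := hf.pd2.pd2.cont
  have e1 := hf.parts1 hf.pd1
  have e2 := hf.parts2 hf.pd2
  have h : (∫ p in Omega2, pd1 f p ^ 2) + ∫ p in Omega2, pd2 f p ^ 2 =
      -∫ p in Omega2, f p * lap f p := by
    unfold lap
    simp only [mul_add]
    rw [integral_add (integrableOn_Omega2 (by fun_prop)) (integrableOn_Omega2 (by fun_prop)),
      e1, e2]
    simp only [← pow_two]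
    ring
  rw [h]
  exact (neg_le_abs _).trans (integral_mul_le_sqrt hf.cont hf.cont_lap)

end SmoothPer

/-! ### The anisotropic Ladyzhenskaya inequality -/

/-- One-dimensional sup bound: `g²` exceeds its mean by at most the variation of `g²`. -/
lemma sq_le_mean_add {g g' : ℝ → ℝ} (hg : ∀ x, HasDerivAt g (g' x) x) (hg' : Continuous g')
    {x : ℝ} (hx : x ∈ Icc 0 (2 * π)) :
    g x ^ 2 ≤ ∫ s in 0..2 * π, ((2 * π)⁻¹ * g s ^ 2 + 2 * |g s * g' s|) := by
  have hπ : (0 : ℝ) < 2 * π := by positivity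
  have cg : Continuous g := continuous_iff_continuousAt.2 fun x => (hg x).continuousAt
  have ci : Continuous fun s => 2 * |g s * g' s| := by fun_prop
  set V := ∫ s in 0..2 * π, 2 * |g s * g' s| with hV
  have h1 : ∀ s ∈ Icc 0 (2 * π), g x ^ 2 ≤ g s ^ 2 + V := by
    intro s hs
    have e : ∫ t in s..x, 2 * (g t * g' t) = g x ^ 2 - g s ^ 2 := by
      refine intervalIntegral.integral_eq_sub_of_hasDerivAt (f := fun t => g t ^ 2) ?_ ?_
      · intro t _
        exact ((hg t).pow 2).congr_deriv (by push_cast; ring)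
      · exact Continuous.intervalIntegrable (by fun_prop) _ _
    have b : |∫ t in s..x, 2 * (g t * g' t)| ≤ V := by
      rw [← Real.norm_eq_abs]
      refine (intervalIntegral.norm_integral_le_integral_norm_uIoc
        (f := fun t => 2 * (g t * g' t))).trans ?_
      rw [hV, intervalIntegral.integral_of_le hπ.le]
      have : ∀ t, ‖2 * (g t * g' t)‖ = 2 * |g t * g' t| := fun t => by
        rw [Real.norm_eq_abs, abs_mul, abs_two]
      simp only [this]
      refine setIntegral_mono_set ?_ (ae_of_all _ fun t => by positivity) ?_
      · exact (ci.integrableOn_Icc (a := 0) (b := 2 * π)).mono_set Ioc_subset_Icc_self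
      · refine LE.le.eventuallyLE ?_
        exact Ioc_subset_Ioc (le_min hs.1 hx.1) (max_le hs.2 hx.2)
    have := (le_abs_self _).trans b
    linarith
  have h2 : ∫ _s in 0..2 * π, g x ^ 2 ≤ ∫ s in 0..2 * π, (g s ^ 2 + V) :=
    intervalIntegral.integral_mono_on hπ.le (by simp)
      (Continuous.intervalIntegrable (by fun_prop) _ _) h1
  rw [intervalIntegral.integral_add (Continuous.intervalIntegrable (by fun_prop) _ _) (by simp)]
    at h2
  simp only [intervalIntegral.integral_const, sub_zero, smul_eq_mul] at h2
  rw [intervalIntegral.integral_add (Continuous.intervalIntegrable (by fun_prop) _ _)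
    (ci.intervalIntegrable _ _), intervalIntegral.integral_const_mul, ← hV]
  have h3 : g x ^ 2 = (2 * π)⁻¹ * (2 * π * g x ^ 2) := by field_simp
  have h4 : V = (2 * π)⁻¹ * (2 * π * V) := by field_simp
  rw [h3, h4, ← mul_add]
  gcongr

namespace SmoothPer

variable {f g h : ℝ × ℝ → ℝ}

/-- `f²` is dominated by a function of `y` alone and `g²` by a function of `x` alone, so the
integral of `f² g²` is dominated by a product of two integrals. -/
lemma integral_sq_mul_sq_le (hf : SmoothPer f) (hg : SmoothPer g) :
    ∫ p in Omega2, (f p * g p) ^ 2 ≤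
      (∫ p in Omega2, ((2 * π)⁻¹ * f p ^ 2 + 2 * |f p * pd1 f p|)) *
        ∫ p in Omega2, ((2 * π)⁻¹ * g p ^ 2 + 2 * |g p * pd2 g p|) := by
  have c1 := hf.cont
  have c2 := hg.cont
  have c3 := hf.pd1.cont
  have c4 := hg.pd2.cont
  set a : ℝ → ℝ := fun y => ∫ x in 0..2 * π,
    ((2 * π)⁻¹ * f (x, y) ^ 2 + 2 * |f (x, y) * pd1 f (x, y)|) with ha
  set b : ℝ → ℝ := fun x => ∫ y in 0..2 * π,
    ((2 * π)⁻¹ * g (x, y) ^ 2 + 2 * |g (x, y) * pd2 g (x, y)|) with hb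
  have ca : Continuous a :=
    intervalIntegral.continuous_parametric_intervalIntegral_of_continuous'
      (by unfold Function.uncurry; fun_prop) _ _
  have cb : Continuous b :=
    intervalIntegral.continuous_parametric_intervalIntegral_of_continuous'
      (by unfold Function.uncurry; fun_prop) _ _
  have e : ∫ p in Omega2, b p.1 * a p.2 =
      (∫ x in 0..2 * π, b x) * ∫ y in 0..2 * π, a y := by
    rw [integral_Omega2_eq_xy (by fun_prop)]
    simp only [intervalIntegral.integral_const_mul, intervalIntegral.integral_mul_const]
  rw [integral_Omega2_eq_yx (F := fun p => (2 * π)⁻¹ * f p ^ 2 + 2 * |f p * pd1 f p|)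
      (by fun_prop),
    integral_Omega2_eq_xy (F := fun p => (2 * π)⁻¹ * g p ^ 2 + 2 * |g p * pd2 g p|)
      (by fun_prop), mul_comm, ← e]
  refine setIntegral_mono_on (integrableOn_Omega2 (by fun_prop))
    (integrableOn_Omega2 (by fun_prop)) (measurableSet_Icc.prod measurableSet_Icc) ?_
  rintro ⟨x, y⟩ ⟨hx, hy⟩
  have h1 : f (x, y) ^ 2 ≤ a y :=
    sq_le_mean_add (fun s => hf.hasDerivAt1 s y) (by fun_prop) hx
  have h2 : g (x, y) ^ 2 ≤ b x :=
    sq_le_mean_add (fun s => hg.hasDerivAt2 x s) (by fun_prop) hy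
  rw [mul_pow, mul_comm (b _)]
  exact mul_le_mul h1 h2 (sq_nonneg _) ((sq_nonneg _).trans h1)

lemma sup_integral_le {d : ℝ × ℝ → ℝ} (hf : Continuous f) (hd : Continuous d) {L M : ℝ}
    (hL : 0 ≤ L) (hfL : √(∫ p in Omega2, f p ^ 2) ≤ L) (hdM : √(∫ p in Omega2, d p ^ 2) ≤ M)
    (hLM : L ≤ M) :
    ∫ p in Omega2, ((2 * π)⁻¹ * f p ^ 2 + 2 * |f p * d p|) ≤ 3 * (L * M) := by
  rw [integral_add (integrableOn_Omega2 (by fun_prop)) (integrableOn_Omega2 (by fun_prop)),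
    MeasureTheory.integral_const_mul, MeasureTheory.integral_const_mul]
  have h1 : ∫ p in Omega2, |f p * d p| ≤ L * M := by
    have := (le_abs_self _).trans (integral_mul_le_sqrt hf.abs hd.abs)
    simp only [sq_abs, ← abs_mul] at this
    exact this.trans (mul_le_mul hfL hdM (Real.sqrt_nonneg _) hL)
  have h2 : ∫ p in Omega2, f p ^ 2 ≤ L * M := by
    have : ∫ p in Omega2, f p ^ 2 ≤ L ^ 2 := (Real.sqrt_le_left hL).1 hfL
    nlinarith
  have h3 : (2 * π)⁻¹ ≤ (1 : ℝ) := inv_le_one_of_one_le₀ (by linarith [Real.two_le_pi])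
  have h4 : 0 ≤ ∫ p in Omega2, f p ^ 2 := integral_nonneg fun p => sq_nonneg _
  nlinarith

/-- A single trilinear term `∫ f g h`, with `h` standing for a first derivative. -/
lemma trilinear_le (hf : SmoothPer f) (hg : SmoothPer g) (hh : Continuous h) {L M : ℝ}
    (hL : 0 ≤ L) (hLM : L ≤ M) (hfL : √(∫ p in Omega2, f p ^ 2) ≤ L)
    (hgL : √(∫ p in Omega2, g p ^ 2) ≤ L) (hfM : √(∫ p in Omega2, pd1 f p ^ 2) ≤ M)
    (hgM : √(∫ p in Omega2, pd2 g p ^ 2) ≤ M) (hhM : √(∫ p in Omega2, h p ^ 2) ≤ M) :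
    |∫ p in Omega2, f p * g p * h p| ≤ 3 * (L * M ^ 2) := by
  have c1 := hf.cont
  have c2 := hg.cont
  have hM : 0 ≤ M := hL.trans hLM
  have h1 := sup_integral_le c1 hf.pd1.cont hL hfL hfM hLM
  have h2 := sup_integral_le c2 hg.pd2.cont hL hgL hgM hLM
  have h3 : ∫ p in Omega2, (f p * g p) ^ 2 ≤ (3 * (L * M)) ^ 2 := by
    rw [pow_two (3 * (L * M))]
    refine (hf.integral_sq_mul_sq_le hg).trans (mul_le_mul h1 h2 ?_ (by positivity))
    exact integral_nonneg fun p => by positivity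
  have h4 : √(∫ p in Omega2, (f p * g p) ^ 2) ≤ 3 * (L * M) :=
    Real.sqrt_le_iff.2 ⟨by positivity, h3⟩
  refine (integral_mul_le_sqrt (f := fun p => f p * g p) (by fun_prop) hh).trans ?_
  calc _ ≤ 3 * (L * M) * M := mul_le_mul h4 hhM (Real.sqrt_nonneg _) (by positivity)
    _ = _ := by ring

end SmoothPer

/-! ### Parseval's identity on the box -/

/-- Parseval on `[0, 2π]`, with the exponentials written out. -/
lemma hasSum_sq_coeff_one {g : ℝ → ℂ} (hg : Continuous g) :
    HasSum (fun n : ℤ =>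
        ‖((2 * π)⁻¹ : ℝ) • ∫ x in 0..2 * π, g x * Complex.exp (-Complex.I * (n * x))‖ ^ 2)
      ((2 * π)⁻¹ * ∫ x in 0..2 * π, ‖g x‖ ^ 2) := by
  have hπ : (0 : ℝ) < 2 * π := by positivity
  have hL2 : MemLp g 2 (volume.restrict (Ioc 0 (2 * π))) := by
    obtain ⟨M, hM⟩ := (isCompact_Icc (a := (0 : ℝ)) (b := 2 * π)).exists_bound_of_continuousOn
      hg.continuousOn
    exact MemLp.of_bound hg.aestronglyMeasurable M
      ((ae_restrict_mem measurableSet_Ioc).mono fun x hx => hM x (Ioc_subset_Icc_self hx))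
  have h := hasSum_sq_fourierCoeffOn hπ hL2
  simp only [sub_zero, smul_eq_mul] at h
  convert h using 3 with n
  rw [fourierCoeffOn_eq_integral]
  congr 1
  simp only [sub_zero, one_div]
  congr 1
  refine intervalIntegral.integral_congr fun x _ => ?_
  simp only [smul_eq_mul]
  rw [fourier_coe_apply, mul_comm]
  congr 2
  have : (π : ℂ) ≠ 0 := by exact_mod_cast Real.pi_ne_zero
  push_cast
  rw [sub_zero]
  field_simp

/-- Parseval on the box: the one-dimensional identity applied in `x`, then in `y` to each partial
Fourier coefficient. -/
lemma hasSum_sq_fc {f : ℝ × ℝ → ℝ} (hf : Continuous f) :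
    HasSum (fun ℓ : ℤ × ℤ => (2 * π) ^ 2 * ‖fc f ℓ‖ ^ 2) (∫ p in Omega2, f p ^ 2) := by
  have hπ : (0 : ℝ) < 2 * π := by positivity
  -- partial Fourier coefficients in the first variable
  set c : ℤ → ℝ → ℂ := fun m y =>
    ((2 * π)⁻¹ : ℝ) • ∫ x in 0..2 * π, (f (x, y) : ℂ) * Complex.exp (-Complex.I * (m * x)) with hc
  have cc : ∀ m, Continuous (c m) := by
    intro m
    have h : Continuous fun y =>
        ∫ x in 0..2 * π, (f (x, y) : ℂ) * Complex.exp (-Complex.I * (m * x)) :=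
      intervalIntegral.continuous_parametric_intervalIntegral_of_continuous'
        (by unfold Function.uncurry; fun_prop) _ _
    exact h.const_smul ((2 * π)⁻¹ : ℝ)
  have hfc : ∀ m n : ℤ, fc f (m, n) =
      ((2 * π)⁻¹ : ℝ) • ∫ y in 0..2 * π, c m y * Complex.exp (-Complex.I * (n * y)) := by
    intro m n
    unfold fc
    rw [integral_Omega2_eq_yx (by fun_prop)]
    simp only [hc, smul_mul_assoc, ← intervalIntegral.integral_mul_const]
    rw [intervalIntegral.integral_smul, smul_smul, ← mul_inv, ← pow_two]
    congr 1
    refine intervalIntegral.integral_congr fun y _ => ?_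
    refine intervalIntegral.integral_congr fun x _ => ?_
    rw [mul_assoc, ← Complex.exp_add]
    congr 2
    ring
  have h1 : ∀ y, HasSum (fun m => ‖c m y‖ ^ 2) ((2 * π)⁻¹ * ∫ x in 0..2 * π, f (x, y) ^ 2) := by
    intro y
    have := hasSum_sq_coeff_one (g := fun x => (f (x, y) : ℂ)) (by fun_prop)
    simpa only [Complex.norm_real, Real.norm_eq_abs, sq_abs] using this
  have h2 : ∀ m, HasSum (fun n => ‖fc f (m, n)‖ ^ 2)
      ((2 * π)⁻¹ * ∫ y in 0..2 * π, ‖c m y‖ ^ 2) := by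
    intro m
    simp only [hfc]
    exact hasSum_sq_coeff_one (cc m)
  have cI : Continuous fun y => (2 * π)⁻¹ * ∫ x in 0..2 * π, f (x, y) ^ 2 :=
    (intervalIntegral.continuous_parametric_intervalIntegral_of_continuous'
      (by unfold Function.uncurry; fun_prop) _ _).const_mul _
  have h3 : HasSum (fun m => ∫ y in 0..2 * π, ‖c m y‖ ^ 2)
      (∫ y in 0..2 * π, (2 * π)⁻¹ * ∫ x in 0..2 * π, f (x, y) ^ 2) := by
    refine intervalIntegral.hasSum_integral_of_dominated_convergence
      (fun m y => ‖c m y‖ ^ 2) ?_ ?_ ?_ ?_ ?_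
    · exact fun m => ((cc m).norm.pow 2).aestronglyMeasurable
    · exact fun m => ae_of_all _ fun y _ => by simp
    · exact ae_of_all _ fun y _ => (h1 y).summable
    · simp only [fun y => (h1 y).tsum_eq]
      exact cI.intervalIntegrable _ _
    · exact ae_of_all _ fun y _ => h1 y
  rw [intervalIntegral.integral_const_mul, ← integral_Omega2_eq_yx (F := fun p => f p ^ 2)
    (by fun_prop)] at h3
  have h4 := h3.mul_left (2 * π)⁻¹
  have hs : Summable fun ℓ : ℤ × ℤ => ‖fc f ℓ‖ ^ 2 := by
    rw [summable_prod_of_nonneg fun _ => sq_nonneg _]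
    refine ⟨fun m => (h2 m).summable, ?_⟩
    simp only [fun m => (h2 m).tsum_eq]
    exact h4.summable
  have h5 := hs.hasSum.prod_fiberwise h2
  have h6 := hs.hasSum
  rw [h5.unique h4] at h6
  have h7 : (2 * π) ^ 2 * ((2 * π)⁻¹ * ((2 * π)⁻¹ * ∫ p in Omega2, f p ^ 2)) =
      ∫ p in Omega2, f p ^ 2 := by
    field_simp
  rw [← h7]
  exact h6.mul_left ((2 * π) ^ 2)

namespace SmoothPer

variable {f : ℝ × ℝ → ℝ}

lemma hasDerivAt_exp_lin (a b : ℂ) (x : ℝ) :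
    HasDerivAt (fun s : ℝ => Complex.exp (-Complex.I * (a * s + b)))
      (-(Complex.I * a) * Complex.exp (-Complex.I * (a * x + b))) x := by
  have h1 : HasDerivAt (fun s : ℝ => (s : ℂ)) 1 x := Complex.ofRealCLM.hasDerivAt
  exact ((((h1.const_mul a).add_const b).const_mul (-Complex.I)).cexp).congr_deriv (by ring)

lemma exp_shift (n : ℤ) (b : ℂ) :
    Complex.exp (-Complex.I * (n * ((2 * π : ℝ) : ℂ) + b)) = Complex.exp (-Complex.I * b) := by
  rw [Complex.exp_eq_exp_iff_exists_int]
  exact ⟨-n, by push_cast; ring⟩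

lemma fc_pd1 (hf : SmoothPer f) (ℓ : ℤ × ℤ) : fc (pd1 f) ℓ = Complex.I * ℓ.1 * fc f ℓ := by
  have c1 := hf.cont
  have c2 := hf.pd1.cont
  unfold fc
  rw [mul_smul_comm, ← MeasureTheory.integral_const_mul, ← sub_eq_zero, ← smul_sub,
    ← integral_sub (integrableOn_Omega2 (by fun_prop)) (integrableOn_Omega2 (by fun_prop)),
    integral_Omega2_eq_yx (by fun_prop)]
  have h : ∀ y : ℝ, ∫ x in 0..2 * π,
      ((pd1 f (x, y) : ℂ) * Complex.exp (-Complex.I * (ℓ.1 * x + ℓ.2 * y)) -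
        Complex.I * ℓ.1 * (f (x, y) * Complex.exp (-Complex.I * (ℓ.1 * x + ℓ.2 * y)))) = 0 := by
    intro y
    rw [intervalIntegral.integral_eq_sub_of_hasDerivAt
      (f := fun x : ℝ => (f (x, y) : ℂ) * Complex.exp (-Complex.I * (ℓ.1 * x + ℓ.2 * y)))]
    · have e := hf.per1 0 y
      rw [zero_add] at e
      rw [exp_shift, e]
      simp
    · intro x _
      exact ((hf.hasDerivAt1 x y).ofReal_comp.mul (hasDerivAt_exp_lin ℓ.1 (ℓ.2 * y) x)).congr_deriv
        (by ring)
    · exact Continuous.intervalIntegrable (by fun_prop) _ _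
  simp only [h, intervalIntegral.integral_zero, smul_zero]

lemma fc_pd2 (hf : SmoothPer f) (ℓ : ℤ × ℤ) : fc (pd2 f) ℓ = Complex.I * ℓ.2 * fc f ℓ := by
  have c1 := hf.cont
  have c2 := hf.pd2.cont
  unfold fc
  rw [mul_smul_comm, ← MeasureTheory.integral_const_mul, ← sub_eq_zero, ← smul_sub,
    ← integral_sub (integrableOn_Omega2 (by fun_prop)) (integrableOn_Omega2 (by fun_prop)),
    integral_Omega2_eq_xy (by fun_prop)]
  have h : ∀ x : ℝ, ∫ y in 0..2 * π,
      ((pd2 f (x, y) : ℂ) * Complex.exp (-Complex.I * (ℓ.1 * x + ℓ.2 * y)) -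
        Complex.I * ℓ.2 * (f (x, y) * Complex.exp (-Complex.I * (ℓ.1 * x + ℓ.2 * y)))) = 0 := by
    intro x
    simp only [add_comm ((ℓ.1 : ℂ) * x)]
    rw [intervalIntegral.integral_eq_sub_of_hasDerivAt
      (f := fun y : ℝ => (f (x, y) : ℂ) * Complex.exp (-Complex.I * (ℓ.2 * y + ℓ.1 * x)))]
    · have e := hf.per2 x 0
      rw [zero_add] at e
      rw [exp_shift, e]
      simp
    · intro y _
      exact ((hf.hasDerivAt2 x y).ofReal_comp.mul (hasDerivAt_exp_lin ℓ.2 (ℓ.1 * x) y)).congr_deriv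
        (by ring)
    · exact Continuous.intervalIntegrable (by fun_prop) _ _
  simp only [h, intervalIntegral.integral_zero, smul_zero]

lemma fc_lap (hf : SmoothPer f) (ℓ : ℤ × ℤ) :
    fc (lap f) ℓ = -((ℓ.1 : ℂ) ^ 2 + (ℓ.2 : ℂ) ^ 2) * fc f ℓ := by
  have c1 := hf.pd1.pd1.cont
  have c2 := hf.pd2.pd2.cont
  have h : fc (lap f) ℓ = fc (pd1 (pd1 f)) ℓ + fc (pd2 (pd2 f)) ℓ := by
    unfold fc lap
    rw [← smul_add,
      ← integral_add (integrableOn_Omega2 (by fun_prop)) (integrableOn_Omega2 (by fun_prop))]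
    simp only [Complex.ofReal_add, add_mul]
  rw [h, hf.pd1.fc_pd1, hf.fc_pd1, hf.pd2.fc_pd2, hf.fc_pd2]
  linear_combination ((ℓ.1 : ℂ) ^ 2 + (ℓ.2 : ℂ) ^ 2) * fc f ℓ * Complex.I_sq

lemma norm_fc_lap_sq (hf : SmoothPer f) (ℓ : ℤ × ℤ) :
    ‖fc (lap f) ℓ‖ ^ 2 = ((ℓ.1 : ℝ) ^ 2 + (ℓ.2 : ℝ) ^ 2) ^ 2 * ‖fc f ℓ‖ ^ 2 := by
  have : -((ℓ.1 : ℂ) ^ 2 + (ℓ.2 : ℂ) ^ 2) = ((-((ℓ.1 : ℝ) ^ 2 + (ℓ.2 : ℝ) ^ 2) : ℝ) : ℂ) := by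
    push_cast; rfl
  rw [hf.fc_lap, norm_mul, mul_pow, this, Complex.norm_real, Real.norm_eq_abs, sq_abs, neg_sq]

end SmoothPer

/-! ### Sobolev norms of mean-free vector fields -/

/-- A smooth periodic vector field has smooth periodic components. -/
lemma smoothPer_components {u : ℝ × ℝ → ℝ × ℝ} (hu : ∀ n : ℕ, ContDiff ℝ n u)
    (hp : Periodic2 u) : SmoothPer (fun y => (u y).1) ∧ SmoothPer (fun y => (u y).2) :=
  ⟨⟨fun n => (hu n).fst, fun x y => by rw [(hp (x, y)).1], fun x y => by rw [(hp (x, y)).2]⟩,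
    ⟨fun n => (hu n).snd, fun x y => by rw [(hp (x, y)).1], fun x y => by rw [(hp (x, y)).2]⟩⟩

section Vector

variable {u : ℝ × ℝ → ℝ × ℝ}

lemma l2sq_eq (h1 : SmoothPer fun y => (u y).1) (h2 : SmoothPer fun y => (u y).2) :
    l2sq u = (∫ p in Omega2, (u p).1 ^ 2) + ∫ p in Omega2, (u p).2 ^ 2 :=
  integral_add (integrableOn_Omega2 (h1.cont.pow 2)) (integrableOn_Omega2 (h2.cont.pow 2))

lemma l2sqLap_eq (h1 : SmoothPer fun y => (u y).1) (h2 : SmoothPer fun y => (u y).2) :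
    l2sqLap u = (∫ p in Omega2, lap (fun y => (u y).1) p ^ 2) +
      ∫ p in Omega2, lap (fun y => (u y).2) p ^ 2 :=
  integral_add (integrableOn_Omega2 (h1.cont_lap.pow 2)) (integrableOn_Omega2 (h2.cont_lap.pow 2))

lemma hasSum_l2sq (h1 : SmoothPer fun y => (u y).1) (h2 : SmoothPer fun y => (u y).2) :
    HasSum (fun ℓ => (2 * π) ^ 2 * coefAbsSq u ℓ) (l2sq u) := by
  rw [l2sq_eq h1 h2]
  convert (hasSum_sq_fc h1.cont).add (hasSum_sq_fc h2.cont) using 2 with ℓ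
  unfold coefAbsSq
  ring

lemma hasSum_l2sqLap (h1 : SmoothPer fun y => (u y).1) (h2 : SmoothPer fun y => (u y).2) :
    HasSum (fun ℓ : ℤ × ℤ => (2 * π) ^ 2 * (((ℓ.1 : ℝ) ^ 2 + (ℓ.2 : ℝ) ^ 2) ^ 2 * coefAbsSq u ℓ))
      (l2sqLap u) := by
  rw [l2sqLap_eq h1 h2]
  convert (hasSum_sq_fc h1.cont_lap).add (hasSum_sq_fc h2.cont_lap) using 2 with ℓ
  rw [h1.norm_fc_lap_sq, h2.norm_fc_lap_sq]
  unfold coefAbsSq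
  ring

lemma coefAbsSq_nonneg (ℓ : ℤ × ℤ) : 0 ≤ coefAbsSq u ℓ := by
  unfold coefAbsSq
  positivity

lemma coefAbsSq_zero (hu : Continuous u) (hm : ∫ x in Omega2, u x = 0) : coefAbsSq u 0 = 0 := by
  have hi := integrableOn_Omega2 hu
  have e1 : ∫ x in Omega2, (u x).1 = 0 := by rw [← fst_integral hi, hm]; rfl
  have e2 : ∫ x in Omega2, (u x).2 = 0 := by rw [← snd_integral hi, hm]; rfl
  simp [coefAbsSq, fc, integral_complex_ofReal, e1, e2]

lemma one_le_modeSq {ℓ : ℤ × ℤ} (hℓ : ℓ ≠ 0) : (1 : ℝ) ≤ (ℓ.1 : ℝ) ^ 2 + (ℓ.2 : ℝ) ^ 2 := by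
  have : 1 ≤ ℓ.1 ^ 2 + ℓ.2 ^ 2 := by
    by_contra! h
    have a1 : ℓ.1 ^ 2 = 0 := by nlinarith [sq_nonneg ℓ.1, sq_nonneg ℓ.2]
    have a2 : ℓ.2 ^ 2 = 0 := by nlinarith [sq_nonneg ℓ.1, sq_nonneg ℓ.2]
    exact hℓ (Prod.ext (by simpa using a1) (by simpa using a2))
  exact_mod_cast this

/-- Poincaré inequality `‖u‖ ≤ ‖Δu‖`. -/
lemma l2sq_le_l2sqLap (h1 : SmoothPer fun y => (u y).1) (h2 : SmoothPer fun y => (u y).2)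
    (h0 : coefAbsSq u 0 = 0) : l2sq u ≤ l2sqLap u := by
  refine hasSum_le (fun ℓ => ?_) (hasSum_l2sq h1 h2) (hasSum_l2sqLap h1 h2)
  by_cases hℓ : ℓ = 0
  · simp [hℓ, h0]
  · have := one_le_modeSq hℓ
    have h3 := coefAbsSq_nonneg (u := u) ℓ
    gcongr
    exact le_mul_of_one_le_left h3 (one_le_pow₀ this)

lemma hnormSq_nonneg (κ : ℝ) : 0 ≤ hnormSq u κ := by
  refine mul_nonneg (by positivity) (tsum_nonneg fun ℓ => ?_)
  split_ifs
  · exact le_rfl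
  · exact mul_nonneg (by positivity) (coefAbsSq_nonneg ℓ)

/-- Additive interpolation of `L²` between `Ḣ^{-α}` and `Ḣ²`: modes with `|ℓ|² ≤ S` are
controlled by the first term, the others by the second. -/
lemma l2sq_interp (h1 : SmoothPer fun y => (u y).1) (h2 : SmoothPer fun y => (u y).2)
    (h0 : coefAbsSq u 0 = 0) {α S : ℝ} (hα : 0 ≤ α) (hS : 0 < S) :
    l2sq u ≤ S ^ α * hnormSq u (-α) + (S ^ 2)⁻¹ * l2sqLap u := by
  have hs : Summable fun ℓ : ℤ × ℤ =>
      if ℓ = 0 then 0 else ((ℓ.1 : ℝ) ^ 2 + (ℓ.2 : ℝ) ^ 2) ^ (-α) * coefAbsSq u ℓ := by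
    have hc : Summable fun ℓ => coefAbsSq u ℓ :=
      (summable_mul_left_iff (by positivity)).1 (hasSum_l2sq h1 h2).summable
    refine Summable.of_nonneg_of_le (fun ℓ => ?_) (fun ℓ => ?_) hc
    · split_ifs
      · exact le_rfl
      · exact mul_nonneg (by positivity) (coefAbsSq_nonneg ℓ)
    · split_ifs with hℓ
      · exact coefAbsSq_nonneg ℓ
      · exact mul_le_of_le_one_left (coefAbsSq_nonneg ℓ)
          (Real.rpow_le_one_of_one_le_of_nonpos (one_le_modeSq hℓ) (by linarith))
  have hH := (hs.hasSum.mul_left ((2 * π) ^ 2)).mul_left (S ^ α)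
  refine hasSum_le (fun ℓ => ?_) (hasSum_l2sq h1 h2)
    (hH.add ((hasSum_l2sqLap h1 h2).mul_left (S ^ 2)⁻¹))
  have hc := coefAbsSq_nonneg (u := u) ℓ
  split_ifs with hℓ
  · simp [hℓ, h0]
  · have hm := one_le_modeSq hℓ
    set m := (ℓ.1 : ℝ) ^ 2 + (ℓ.2 : ℝ) ^ 2
    have hm0 : 0 < m := by linarith
    have key : 1 ≤ S ^ α * m ^ (-α) + (S ^ 2)⁻¹ * m ^ 2 := by
      rcases le_total m S with h | h
      · have : 1 ≤ S ^ α * m ^ (-α) := by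
          rw [Real.rpow_neg hm0.le, ← div_eq_mul_inv, one_le_div (by positivity)]
          exact Real.rpow_le_rpow hm0.le h hα
        have : 0 ≤ (S ^ 2)⁻¹ * m ^ 2 := by positivity
        linarith
      · have : 1 ≤ (S ^ 2)⁻¹ * m ^ 2 := by
          rw [mul_comm, ← div_eq_mul_inv, one_le_div (by positivity)]
          gcongr
        have : 0 ≤ S ^ α * m ^ (-α) := by positivity
        linarith
    calc (2 * π) ^ 2 * coefAbsSq u ℓ = 1 * ((2 * π) ^ 2 * coefAbsSq u ℓ) := by ring
      _ ≤ (S ^ α * m ^ (-α) + (S ^ 2)⁻¹ * m ^ 2) * ((2 * π) ^ 2 * coefAbsSq u ℓ) := by gcongr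
      _ = _ := by ring

/-- The trilinear form is at most `12 ‖u‖² ‖Δu‖`: four terms, each bounded by
`trilinear_le` with `M² = ‖u‖ ‖Δu‖`. -/
lemma advection_le (h1 : SmoothPer fun y => (u y).1) (h2 : SmoothPer fun y => (u y).2)
    (h0 : coefAbsSq u 0 = 0) :
    |∫ x in Omega2,
        (adv u (fun z => (u z).1) x * (u x).1 + adv u (fun z => (u z).2) x * (u x).2)|
      ≤ 12 * l2sq u * √(l2sqLap u) := by
  set f : ℝ × ℝ → ℝ := fun y => (u y).1 with hf
  set g : ℝ × ℝ → ℝ := fun y => (u y).2 with hg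
  have pf : 0 ≤ ∫ p in Omega2, f p ^ 2 := integral_nonneg fun p => sq_nonneg _
  have pg : 0 ≤ ∫ p in Omega2, g p ^ 2 := integral_nonneg fun p => sq_nonneg _
  have qf : 0 ≤ ∫ p in Omega2, lap f p ^ 2 := integral_nonneg fun p => sq_nonneg _
  have qg : 0 ≤ ∫ p in Omega2, lap g p ^ 2 := integral_nonneg fun p => sq_nonneg _
  have eL : l2sq u = (∫ p in Omega2, f p ^ 2) + ∫ p in Omega2, g p ^ 2 := l2sq_eq h1 h2
  have eA : l2sqLap u = (∫ p in Omega2, lap f p ^ 2) + ∫ p in Omega2, lap g p ^ 2 :=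
    l2sqLap_eq h1 h2
  have hLA : √(l2sq u) ≤ √(l2sqLap u) := Real.sqrt_le_sqrt (l2sq_le_l2sqLap h1 h2 h0)
  have hLsq : √(l2sq u) ^ 2 = l2sq u := Real.sq_sqrt (by rw [eL]; positivity)
  set L := √(l2sq u) with hL
  set A := √(l2sqLap u) with hA
  have L0 : 0 ≤ L := Real.sqrt_nonneg _
  have A0 : 0 ≤ A := Real.sqrt_nonneg _
  set M := √(L * A) with hM
  have hMsq : M ^ 2 = L * A := Real.sq_sqrt (by positivity)
  have hLM : L ≤ M := Real.le_sqrt_of_sq_le (by nlinarith)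
  have hfL : √(∫ p in Omega2, f p ^ 2) ≤ L := Real.sqrt_le_sqrt (by linarith)
  have hgL : √(∫ p in Omega2, g p ^ 2) ≤ L := Real.sqrt_le_sqrt (by linarith)
  have hfA : √(∫ p in Omega2, lap f p ^ 2) ≤ A := Real.sqrt_le_sqrt (by linarith)
  have hgA : √(∫ p in Omega2, lap g p ^ 2) ≤ A := Real.sqrt_le_sqrt (by linarith)
  have gf := h1.grad_le.trans (mul_le_mul hfL hfA (Real.sqrt_nonneg _) L0)
  have gg := h2.grad_le.trans (mul_le_mul hgL hgA (Real.sqrt_nonneg _) L0)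
  have r1 : 0 ≤ ∫ p in Omega2, pd1 f p ^ 2 := integral_nonneg fun p => sq_nonneg _
  have r2 : 0 ≤ ∫ p in Omega2, pd2 f p ^ 2 := integral_nonneg fun p => sq_nonneg _
  have r3 : 0 ≤ ∫ p in Omega2, pd1 g p ^ 2 := integral_nonneg fun p => sq_nonneg _
  have r4 : 0 ≤ ∫ p in Omega2, pd2 g p ^ 2 := integral_nonneg fun p => sq_nonneg _
  have m1 : √(∫ p in Omega2, pd1 f p ^ 2) ≤ M := Real.sqrt_le_sqrt (by linarith)
  have m2 : √(∫ p in Omega2, pd2 f p ^ 2) ≤ M := Real.sqrt_le_sqrt (by linarith)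
  have m3 : √(∫ p in Omega2, pd1 g p ^ 2) ≤ M := Real.sqrt_le_sqrt (by linarith)
  have m4 : √(∫ p in Omega2, pd2 g p ^ 2) ≤ M := Real.sqrt_le_sqrt (by linarith)
  have c1 := h1.cont
  have c2 := h2.cont
  have d1 := h1.pd1.cont
  have d2 := h1.pd2.cont
  have d3 := h2.pd1.cont
  have d4 := h2.pd2.cont
  have t1 := h1.trilinear_le h1 d1 L0 hLM hfL hfL m1 m2 m1
  have t2 := h1.trilinear_le h2 d2 L0 hLM hfL hgL m1 m4 m2
  have t3 := h1.trilinear_le h2 d3 L0 hLM hfL hgL m1 m4 m3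
  have t4 := h2.trilinear_le h2 d4 L0 hLM hgL hgL m3 m4 m4
  have e : ∫ x in Omega2, (adv u f x * (u x).1 + adv u g x * (u x).2) =
      (∫ p in Omega2, f p * f p * pd1 f p) + (∫ p in Omega2, f p * g p * pd2 f p) +
        (∫ p in Omega2, f p * g p * pd1 g p) + ∫ p in Omega2, g p * g p * pd2 g p := by
    rw [← integral_add (integrableOn_Omega2 (by fun_prop)) (integrableOn_Omega2 (by fun_prop)),
      ← integral_add (integrableOn_Omega2 (by fun_prop)) (integrableOn_Omega2 (by fun_prop)),
      ← integral_add (integrableOn_Omega2 (by fun_prop)) (integrableOn_Omega2 (by fun_prop))]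
    refine integral_congr_ae (ae_of_all _ fun x => ?_)
    simp only [adv, hf, hg]
    ring
  have hT : 3 * (L * M ^ 2) = 3 * l2sq u * A := by
    rw [hMsq, ← hLsq]
    ring
  rw [hT] at t1 t2 t3 t4
  rw [e]
  refine (abs_add_le _ _).trans ?_
  have s1 := abs_add_le ((∫ p in Omega2, f p * f p * pd1 f p) +
    ∫ p in Omega2, f p * g p * pd2 f p) (∫ p in Omega2, f p * g p * pd1 g p)
  have s2 := abs_add_le (∫ p in Omega2, f p * f p * pd1 f p) (∫ p in Omega2, f p * g p * pd2 f p)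
  linarith

end Vector

/-! ### Absorbing the trilinear term -/

/-- If `A ≥ 2KL` the first term absorbs `KLA`. Otherwise the interpolation hypothesis with
`S² = 4KA` bounds `A` by a multiple of `H^{4/(2-α)}`. -/
lemma absorb {α K L A H : ℝ} (hα2 : α < 2) (hK : 0 < K) (hL : 0 ≤ L) (hA : 0 ≤ A)
    (hH : 0 ≤ H) (hS : ∀ S : ℝ, 0 < S → L ≤ S ^ α * H ^ 2 + (S ^ 2)⁻¹ * A ^ 2) :
    K * L * A ≤ 1 / 2 * A ^ 2 + (16 * K ^ 2) ^ (2 / (2 - α)) * H ^ (4 / (2 - α)) * L := by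
  have hr : 0 < 2 / (2 - α) := div_pos two_pos (by linarith)
  have hpos : 0 ≤ (16 * K ^ 2) ^ (2 / (2 - α)) * H ^ (4 / (2 - α)) := by positivity
  rcases le_or_gt (2 * K * L) A with h | h
  · have := mul_nonneg hpos hL
    nlinarith
  rcases hA.eq_or_lt with h0 | hA
  · have := mul_nonneg hpos hL
    rw [← h0]
    simpa using this
  set B := 4 * K * A with hB
  have hB0 : 0 < B := by positivity
  have h1 := hS (√B) (Real.sqrt_pos.2 hB0)
  rw [Real.sq_sqrt hB0.le, Real.sqrt_eq_rpow, ← Real.rpow_mul hB0.le] at h1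
  have h2 : B⁻¹ * A ^ 2 = A / (4 * K) := by rw [hB]; field_simp
  rw [h2] at h1
  have h3 : A / (2 * K) < L := by rw [div_lt_iff₀ (by positivity)]; linarith
  have h4 : A / (4 * K) ≤ B ^ (1 / 2 * α) * H ^ 2 := by
    have : A / (2 * K) = A / (4 * K) + A / (4 * K) := by field_simp; norm_num
    linarith
  have h5 : B ≤ B ^ (1 / 2 * α) * (16 * K ^ 2 * H ^ 2) := by
    have : B = 16 * K ^ 2 * (A / (4 * K)) := by rw [hB]; field_simp; norm_num
    calc B = 16 * K ^ 2 * (A / (4 * K)) := this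
      _ ≤ 16 * K ^ 2 * (B ^ (1 / 2 * α) * H ^ 2) := by gcongr
      _ = _ := by ring
  have h6 : B ^ (1 - 1 / 2 * α) ≤ 16 * K ^ 2 * H ^ 2 := by
    rw [Real.rpow_sub hB0, Real.rpow_one, div_le_iff₀ (by positivity)]
    linarith
  have h7 : B ≤ (16 * K ^ 2) ^ (2 / (2 - α)) * H ^ (4 / (2 - α)) := by
    have := Real.rpow_le_rpow (by positivity) h6 hr.le
    have hne : 2 - α ≠ 0 := by linarith
    have e1 : (1 - 1 / 2 * α) * (2 / (2 - α)) = 1 := by field_simp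
    have e2 : (2 : ℝ) * (2 / (2 - α)) = 4 / (2 - α) := by ring
    rw [← Real.rpow_mul hB0.le, e1, Real.rpow_one,
      Real.mul_rpow (by positivity) (by positivity), ← Real.rpow_natCast H 2, ← Real.rpow_mul hH,
      Nat.cast_ofNat, e2] at this
    exact this
  have h8 : K * A ≤ B := by rw [hB]; nlinarith [mul_pos hK hA]
  have h9 := mul_le_mul_of_nonneg_right (h8.trans h7) hL
  nlinarith [sq_nonneg A]

/-- For each `α ∈ [0,2)` there is `C₀ > 0` so that for every smooth
2π-periodic mean-free vector field `u`,
`|∫_Ω ((u·∇)u)·u| ≤ (1/2)‖Δu‖²_{L²} + C₀ ‖u‖_{Ḣ^{−α}}^{4/(2−α)} ‖u‖²_{L²}`. -/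
theorem stmt13 :
    ∀ α : ℝ, α ∈ Set.Ico (0:ℝ) 2 →
      ∃ C0 : ℝ, 0 < C0 ∧
        ∀ u : ℝ × ℝ → ℝ × ℝ, (∀ n : ℕ, ContDiff ℝ n u) → Periodic2 u →
          (∫ x in Omega2, u x) = 0 →
          |∫ x in Omega2,
              (adv u (fun z => (u z).1) x * (u x).1 + adv u (fun z => (u z).2) x * (u x).2)|
            ≤ (1/2) * l2sqLap u + C0 * hnorm u (-α) ^ (4 / (2 - α)) * l2sq u := by
  intro α hα
  refine ⟨(16 * 12 ^ 2) ^ (2 / (2 - α)), by positivity, fun u hu hp hm => ?_⟩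
  obtain ⟨h1, h2⟩ := smoothPer_components hu hp
  have h0 := coefAbsSq_zero (hu 0).continuous hm
  have hL : 0 ≤ l2sq u := integral_nonneg fun p => by positivity
  have hA : 0 ≤ l2sqLap u := integral_nonneg fun p => by positivity
  refine (advection_le h1 h2 h0).trans ?_
  have := absorb hα.2 (K := 12) (by norm_num) hL (Real.sqrt_nonneg (l2sqLap u))
    (Real.sqrt_nonneg (hnormSq u (-α))) fun S hS => by
      rw [Real.sq_sqrt hA, Real.sq_sqrt (hnormSq_nonneg _)]
      exact l2sq_interp h1 h2 h0 hα.1 hS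
  rwa [Real.sq_sqrt hA] at this
end
end
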